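/- arXiv:1205.5993 — 5 statements merged into one kernel-verified Lean document; each statement's English description precedes it below -/
import Mathlib

section
/- If X and Y are Banach spaces that are uniformly homeomorphic, i.e., there exists a bijection f : X → Y such that both f and f⁻¹ are uniformly continuous, then X is finitely representable in Y and Y is finitely representable in X. -/
/-- A Banach space `X` is (crudely) finitely representable in a Banach space `Y` if there exists
`K ∈ [1,∞)` such that for every finite-dimensional linear subspace `F ⊆ X` there is a linear
operator `T : F → Y` with `‖x‖ ≤ ‖T x‖ ≤ K ‖x‖` for all `x ∈ F`. -/
def FinitelyRepresentable (X Y : Type*) [NormedAddCommGroup X] [NormedSpace ℝ X]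
    [NormedAddCommGroup Y] [NormedSpace ℝ Y] : Prop :=
  ∃ K : ℝ, 1 ≤ K ∧ ∀ F : Subspace ℝ X, FiniteDimensional ℝ F →
    ∃ T : F →ₗ[ℝ] Y, ∀ x : F, ‖x‖ ≤ ‖T x‖ ∧ ‖T x‖ ≤ K * ‖x‖

namespace Ribe

section avg
variable {X E : Type*} [AddCommGroup X] [AddCommGroup E] [Module ℝ E]

/-- average along a line -/
noncomputable def av (S : ℕ) (v : X) : (X → E) →ₗ[ℝ] (X → E) :=
  (S : ℝ)⁻¹ • ∑ i ∈ Finset.range S, LinearMap.funLeft ℝ E (fun x : X => x + i • v)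

lemma av_apply (S : ℕ) (v : X) (g : X → E) (x : X) :
    av S v g x = (S : ℝ)⁻¹ • ∑ i ∈ Finset.range S, g (x + i • v) := by
  simp [av, LinearMap.sum_apply, LinearMap.funLeft]

/-- iterated averages -/
noncomputable def avl (S : ℕ) : List X → ((X → E) →ₗ[ℝ] (X → E))
  | [] => LinearMap.id
  | v :: l => (av S v).comp (avl S l)

lemma av_comm (S : ℕ) (u v : X) (g : X → E) : av S u (av S v g) = av S v (av S u g) := by
  ext x
  simp only [av_apply, ← Finset.smul_sum]
  rw [Finset.sum_comm]
  congr 2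
  refine Finset.sum_congr rfl fun i _ => Finset.sum_congr rfl fun j _ => ?_
  rw [add_right_comm]

lemma avl_av (S : ℕ) (l : List X) (v : X) (g : X → E) :
    avl S l (av S v g) = av S v (avl S l g) := by
  induction l with
  | nil => rfl
  | cons u l ih => simp only [avl, LinearMap.comp_apply, ih]; rw [av_comm]

lemma av_shift (S : ℕ) (u v : X) (g : X → E) :
    av S v (fun x => g (x + u)) = fun x => av S v g (x + u) := by
  ext x
  simp only [av_apply]
  congr 1
  refine Finset.sum_congr rfl fun i _ => ?_
  rw [add_right_comm]

lemma avl_shift (S : ℕ) (l : List X) (u : X) (g : X → E) :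
    avl S l (fun x => g (x + u)) = fun x => avl S l g (x + u) := by
  induction l with
  | nil => rfl
  | cons v l ih => simp only [avl, LinearMap.comp_apply, ih]; rw [av_shift]

/-- difference operator -/
def df (u : X) (g : X → E) : X → E := (fun x => g (x + u)) - g

lemma avl_df (S : ℕ) (l : List X) (u : X) (g : X → E) :
    avl S l (df u g) = df u (avl S l g) := by
  simp only [df, map_sub, avl_shift]

lemma av_df (S : ℕ) (u : X) (g : X → E) (x : X) :
    av S u (df u g) x = (S : ℝ)⁻¹ • (g (x + S • u) - g x) := by
  rw [av_apply]
  congr 1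
  have := Finset.sum_range_sub (fun i : ℕ => g (x + i • u)) S
  simp only [zero_smul, add_zero] at this
  rw [← this]
  refine Finset.sum_congr rfl fun i _ => ?_
  simp only [df, Pi.sub_apply, add_smul, one_smul, add_assoc]

lemma av_mem {S : ℕ} (hS : S ≠ 0) (v : X) (g : X → E) {s : Set E} (hs : Convex ℝ s)
    (h : ∀ x, g x ∈ s) (x : X) : av S v g x ∈ s := by
  rw [av_apply, Finset.smul_sum]
  refine hs.sum_mem (fun _ _ => by positivity) ?_ (fun i _ => h _)
  simp [hS]

lemma avl_mem {S : ℕ} (hS : S ≠ 0) (l : List X) (g : X → E) {s : Set E} (hs : Convex ℝ s)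
    (h : ∀ x, g x ∈ s) : ∀ x : X, avl S l g x ∈ s := by
  induction l with
  | nil => exact h
  | cons v l ih => exact av_mem hS v _ hs ih

lemma avl_mem' {S : ℕ} (hS : S ≠ 0) (l : List X) (v : X) (hv : v ∈ l) (g : X → E) {s : Set E}
    (hs : Convex ℝ s) (h : ∀ x, av S v g x ∈ s) : ∀ x : X, avl S l g x ∈ s := by
  induction l with
  | nil => simp at hv
  | cons u l ih =>
    rcases List.mem_cons.1 hv with rfl | hv
    · intro x
      have := avl_mem hS l _ hs h x
      rwa [avl_av] at this
    · exact av_mem hS u _ hs (ih hv)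

end avg

section normed
variable {X E : Type*} [AddCommGroup X] [NormedAddCommGroup E] [NormedSpace ℝ E]

lemma norm_av_le (S : ℕ) (v : X) (g : X → E) (h : X → ℝ) (hg : ∀ x, ‖g x‖ ≤ h x) (x : X) :
    ‖av S v g x‖ ≤ av S v h x := by
  rw [av_apply, av_apply, norm_smul, smul_eq_mul, norm_inv, Real.norm_natCast]
  gcongr
  exact norm_sum_le_of_le _ fun i _ => hg _

lemma norm_avl_le (S : ℕ) (l : List X) (g : X → E) :
    ∀ x, ‖avl S l g x‖ ≤ avl S l (fun x => ‖g x‖) x := by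
  induction l with
  | nil => intro x; exact le_rfl
  | cons u l ih => exact norm_av_le S u _ _ ih

end normed

section core
variable {X Y : Type*} [NormedAddCommGroup X] [NormedSpace ℝ X]
    [NormedAddCommGroup Y] [NormedSpace ℝ Y]

lemma avl_bdd {S : ℕ} (hS : S ≠ 0) (f : X → Y) (L : ℝ) (hL : 1 ≤ L)
    (h1 : ∀ x y, ‖f x - f y‖ ≤ L * ‖x - y‖ + L) (l : List X) (g : X → Y)
    (hg : ∃ M, ∀ x, ‖g x - f x‖ ≤ M) : ∃ M, ∀ x, ‖avl S l g x - f x‖ ≤ M := by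
  induction l with
  | nil => exact hg
  | cons u l ih =>
    obtain ⟨M, hM⟩ := ih
    refine ⟨M + (L * (S * ‖u‖) + L), fun x => ?_⟩
    have : av S u (avl S l g) x ∈ Metric.closedBall (f x) (M + (L * (S * ‖u‖) + L)) := by
      rw [av_apply, Finset.smul_sum]
      refine (convex_closedBall _ _).sum_mem (fun _ _ => by positivity) (by simp [hS])
        (fun i hi => ?_)
      rw [mem_closedBall_iff_norm]
      have a1 := hM (x + i • u)
      have a2 := h1 (x + i • u) x
      rw [add_sub_cancel_left] at a2
      have a3 : ‖i • u‖ ≤ S * ‖u‖ := by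
        rw [← Nat.cast_smul_eq_nsmul ℝ, norm_smul, Real.norm_natCast]
        have : (i : ℝ) ≤ S := by exact_mod_cast (Finset.mem_range.1 hi).le
        gcongr
      have a4 := norm_sub_le_norm_sub_add_norm_sub (avl S l g (x + i • u)) (f (x + i • u)) (f x)
      have a5 : L * ‖i • u‖ ≤ L * (S * ‖u‖) := by gcongr
      linarith
    rwa [mem_closedBall_iff_norm] at this

lemma core_step (f : X → Y) (L : ℝ) (hL : 1 ≤ L)
    (h1 : ∀ x y, ‖f x - f y‖ ≤ L * ‖x - y‖ + L)
    (h2 : ∀ x y, ‖x - y‖ ≤ L * ‖f x - f y‖ + L)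
    (V : Finset X) (ε : ℝ) (hε : 0 < ε) (k : ℕ) :
    ∀ g : X → Y, (∃ M, ∀ x, ‖g x - f x‖ ≤ M) → (∀ v x, ‖df v g x‖ ≤ L * ‖v‖ + L) →
      (∀ x, ∑ v ∈ V, ‖df v g x‖ ≤ k * ε) →
    ∃ D : X → Y, (∀ v ∈ V, ‖D v‖ ≤ L * ‖v‖ + L) ∧ (∀ v ∈ V, ‖v‖ / L - 2 * ε ≤ ‖D v‖) ∧
      ∀ u ∈ V, ∀ v ∈ V, ‖D (u + v) - D u - D v‖ ≤ ε := by
  induction k with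
  | zero => ?_
  | succ k ih => ?_
  all_goals
    rintro g ⟨M, hM⟩ hg hk
    have hM0 : 0 ≤ M := (norm_nonneg _).trans (hM 0)
    obtain ⟨B, hB⟩ : ∃ B : ℝ, ∀ v ∈ V, ‖v‖ ≤ B :=
      ⟨∑ v ∈ V, ‖v‖, fun v hv => Finset.single_le_sum (f := fun v => ‖v‖)
        (fun _ _ => norm_nonneg _) hv⟩
    obtain ⟨S, hS⟩ := exists_nat_gt (max 0 (max ((1 + 2 * M) / ε) (2 * (L * B + L) / ε)))
    rw [max_lt_iff, max_lt_iff, div_lt_iff₀ hε, div_lt_iff₀ hε] at hS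
    obtain ⟨hS0, hS1, hS2⟩ := hS
    have hSn : S ≠ 0 := by rintro rfl; simp at hS0
    set l := V.toList with hl
    have hg' : ∀ v x, ‖df v (avl S l g) x‖ ≤ L * ‖v‖ + L := by
      intro v x
      rw [← avl_df]
      have := avl_mem hSn l (df v g) (convex_closedBall (0 : Y) (L * ‖v‖ + L))
        (fun x => by simpa using hg v x) x
      simpa using this
    have hlow : ∀ v ∈ V, ∀ x, ‖v‖ / L - ε ≤ avl S l (fun x => ‖df v g x‖) x := by
      intro v hv
      refine avl_mem' hSn l v (by simpa [hl] using hv) _ (convex_Ici (‖v‖ / L - ε)) ?_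
      intro y
      refine le_trans ?_ (norm_av_le S v (df v g) _ (fun _ => le_rfl) y)
      rw [av_df, norm_smul, norm_inv, Real.norm_natCast]
      have e1 := h2 (y + S • v) y
      rw [add_sub_cancel_left, ← Nat.cast_smul_eq_nsmul ℝ, norm_smul, Real.norm_natCast] at e1
      rw [← Nat.cast_smul_eq_nsmul ℝ]
      have e2 : ‖f (y + (S : ℝ) • v) - f y‖ ≤ ‖g (y + (S : ℝ) • v) - g y‖ + 2 * M := by
        have a1 := hM (y + (S : ℝ) • v)
        have a2 := hM y
        have : f (y + (S : ℝ) • v) - f y = (g (y + (S : ℝ) • v) - g y)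
          - (g (y + (S : ℝ) • v) - f (y + (S : ℝ) • v)) + (g y - f y) := by abel
        rw [this]
        refine (norm_add_le _ _).trans ?_
        have := norm_sub_le (g (y + (S : ℝ) • v) - g y)
          (g (y + (S : ℝ) • v) - f (y + (S : ℝ) • v))
        linarith
      set N := ‖g (y + (S : ℝ) • v) - g y‖
      have e3 : S * (‖v‖ / L) ≤ N + 2 * M + 1 := by
        rw [← mul_div_assoc, div_le_iff₀ (by linarith)]
        nlinarith
      rw [le_inv_mul_iff₀ hS0]
      nlinarith
    have hadd : ∀ u ∈ V, ∀ v ∈ V, ∀ x, ‖df u (df v (avl S l g)) x‖ ≤ ε := by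
      intro u hu v hv x
      rw [← avl_df, ← avl_df]
      have := avl_mem' hSn l u (by simpa [hl] using hu) (df u (df v g))
        (convex_closedBall (0 : Y) ε) (fun y => by
          rw [mem_closedBall_zero_iff, av_df, norm_smul, norm_inv, Real.norm_natCast,
            inv_mul_le_iff₀ hS0]
          refine (norm_sub_le _ _).trans ?_
          have a1 := hg v (y + S • u)
          have a2 := hg v y
          have a3 := hB v hv
          nlinarith) x
      simpa using this
    have hJ : ∀ v x, ‖df v (avl S l g) x‖ ≤ avl S l (fun x => ‖df v g x‖) x := by
      intro v x
      rw [← avl_df]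
      exact norm_avl_le S l _ x
    have hfin : (∃ x, ∑ v ∈ V, avl S l (fun x => ‖df v g x‖) x
        ≤ ∑ v ∈ V, ‖df v (avl S l g) x‖ + ε) →
        ∃ D : X → Y, (∀ v ∈ V, ‖D v‖ ≤ L * ‖v‖ + L) ∧ (∀ v ∈ V, ‖v‖ / L - 2 * ε ≤ ‖D v‖) ∧
          ∀ u ∈ V, ∀ v ∈ V, ‖D (u + v) - D u - D v‖ ≤ ε := by
      rintro ⟨x, hx⟩
      refine ⟨fun v => df v (avl S l g) x, fun v _ => hg' v x, fun v hv => ?_,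
        fun u hu v hv => ?_⟩
      · have a1 := hlow v hv x
        have a2 := Finset.single_le_sum
          (f := fun v => avl S l (fun x => ‖df v g x‖) x - ‖df v (avl S l g) x‖)
          (fun v _ => sub_nonneg.2 (hJ v x)) hv
        simp only [Finset.sum_sub_distrib] at a2
        linarith
      · convert hadd u hu v hv x using 2
        simp only [df, Pi.sub_apply, ← add_assoc]
        abel
    have hsum : ∀ x, ∑ v ∈ V, avl S l (fun x => ‖df v g x‖) x ≤ _ := fun x => by
      have := avl_mem hSn l (∑ v ∈ V, (fun x => ‖df v g x‖)) (convex_Iic _)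
        (fun x => by simpa using hk x) x
      simpa only [map_sum, Finset.sum_apply, Set.mem_Iic] using this
    by_cases hc : ∃ x, ∑ v ∈ V, avl S l (fun x => ‖df v g x‖) x
        ≤ ∑ v ∈ V, ‖df v (avl S l g) x‖ + ε
    · exact hfin hc
    push Not at hc
  · exfalso
    have a1 := hc 0
    have a2 := hsum 0
    have a3 : 0 ≤ ∑ v ∈ V, ‖df v (avl S l g) 0‖ := Finset.sum_nonneg fun _ _ => norm_nonneg _
    linarith
  · refine ih (avl S l g) (avl_bdd hSn f L hL h1 l g ⟨M, hM⟩) hg' ?_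
    intro x
    have a1 := hc x
    have a2 := hsum x
    linarith

lemma core (f : X → Y) (L : ℝ) (hL : 1 ≤ L)
    (h1 : ∀ x y, ‖f x - f y‖ ≤ L * ‖x - y‖ + L)
    (h2 : ∀ x y, ‖x - y‖ ≤ L * ‖f x - f y‖ + L)
    (V : Finset X) (ε : ℝ) (hε : 0 < ε) :
    ∃ D : X → Y, (∀ v ∈ V, ‖D v‖ ≤ L * ‖v‖ + L) ∧ (∀ v ∈ V, ‖v‖ / L - 2 * ε ≤ ‖D v‖) ∧
      ∀ u ∈ V, ∀ v ∈ V, ‖D (u + v) - D u - D v‖ ≤ ε := by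
  have hd : ∀ v x, ‖df v f x‖ ≤ L * ‖v‖ + L := fun v x => by
    simpa [df] using h1 (x + v) x
  obtain ⟨k, hk⟩ := exists_nat_gt ((∑ v ∈ V, (L * ‖v‖ + L)) / ε)
  rw [div_lt_iff₀ hε] at hk
  exact core_step f L hL h1 h2 V ε hε k f ⟨0, by simp⟩ hd fun x =>
    (Finset.sum_le_sum fun v _ => hd v x).trans hk.le

/-- approximately additive maps are approximately linear on the lattice -/
lemma approx (F : Subspace ℝ X) {ι : Type*} (b : Module.Basis ι ℝ F) (v : F)
    (hv : v ∈ AddSubgroup.closure (Set.range b)) :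
    ∃ (V : Finset F) (C : ℝ), 0 ≤ C ∧ ∀ (ε : ℝ) (D : F → Y),
      0 ≤ ε → (∀ u ∈ V, ∀ w ∈ V, ‖D (u + w) - D u - D w‖ ≤ ε) →
      ∀ T : F →ₗ[ℝ] Y, (∀ i, T (b i) = D (b i)) → ‖T v - D v‖ ≤ C * ε := by
  classical
  induction hv using AddSubgroup.closure_induction with
  | mem x hx =>
    obtain ⟨i, rfl⟩ := hx
    exact ⟨∅, 0, le_rfl, fun ε D hε h T hT => by simp [hT]⟩
  | zero =>
    refine ⟨{0}, 1, zero_le_one, fun ε D hε h T hT => ?_⟩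
    simpa using h 0 (by simp) 0 (by simp)
  | add x y hx hy ihx ihy =>
    obtain ⟨V, C, hC, h⟩ := ihx
    obtain ⟨V', C', hC', h'⟩ := ihy
    refine ⟨V ∪ V' ∪ {x, y}, C + C' + 1, by positivity, fun ε D hε hD T hT => ?_⟩
    have a1 := h ε D hε (fun u hu w hw => hD u (by simp [hu]) w (by simp [hw])) T hT
    have a2 := h' ε D hε (fun u hu w hw => hD u (by simp [hu]) w (by simp [hw])) T hT
    have a3 := hD x (by simp) y (by simp)
    have : T (x + y) - D (x + y) = (T x - D x) + (T y - D y) - (D (x + y) - D x - D y) := by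
      rw [map_add]; abel
    rw [this]
    have b1 := norm_sub_le ((T x - D x) + (T y - D y)) (D (x + y) - D x - D y)
    have b2 := norm_add_le (T x - D x) (T y - D y)
    linarith
  | neg x hx ihx =>
    obtain ⟨V, C, hC, h⟩ := ihx
    refine ⟨V ∪ {x, -x, 0}, C + 2, by positivity, fun ε D hε hD T hT => ?_⟩
    have a1 := h ε D hε (fun u hu w hw => hD u (by simp [hu]) w (by simp [hw])) T hT
    have a2 := hD x (by simp) (-x) (by simp)
    have a3 := hD 0 (by simp) 0 (by simp)
    have : T (-x) - D (-x) = (D (x + -x) - D x - D (-x)) + (D (0 + 0) - D 0 - D 0)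
        - (T x - D x) := by
      rw [map_neg, add_neg_cancel, add_zero]; abel
    rw [this]
    have b1 := norm_sub_le ((D (x + -x) - D x - D (-x)) + (D (0 + 0) - D 0 - D 0)) (T x - D x)
    have b2 := norm_add_le (D (x + -x) - D x - D (-x)) (D (0 + 0) - D 0 - D 0)
    linarith

lemma exists_T (f : X → Y) (L : ℝ) (hL : 1 ≤ L)
    (h1 : ∀ x y, ‖f x - f y‖ ≤ L * ‖x - y‖ + L)
    (h2 : ∀ x y, ‖x - y‖ ≤ L * ‖f x - f y‖ + L)
    (F : Subspace ℝ X) {ι : Type*} (b : Module.Basis ι ℝ F) (V : Finset F)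
    (hV : ∀ v ∈ V, v ∈ AddSubgroup.closure (Set.range b)) :
    ∃ T : F →ₗ[ℝ] Y, ∀ v ∈ V, ‖T v‖ ≤ L * ‖v‖ + L + 1 ∧ ‖v‖ / L - 1 ≤ ‖T v‖ := by
  classical
  have key := fun v : V => approx (Y := Y) F b v.1 (hV v.1 v.2)
  choose W C hC h using key
  have hC' : ∀ v : V, C v ≤ ∑ v, C v := fun v =>
    Finset.single_le_sum (f := C) (fun v _ => hC v) (Finset.mem_univ v)
  have hC0 : 0 ≤ ∑ v, C v := Finset.sum_nonneg fun v _ => hC v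
  set A := ∑ v, C v
  set ε : ℝ := (A + 2)⁻¹
  have hε : 0 < ε := by positivity
  have hAε : A * ε + 2 * ε = 1 := by
    rw [← add_mul]; exact mul_inv_cancel₀ (by positivity)
  obtain ⟨D, hD1, hD2, hD3⟩ := core f L hL h1 h2
    ((V ∪ Finset.univ.biUnion W).image (fun v : F => (v : X))) ε hε
  refine ⟨b.constr ℝ (fun i => D (b i)), fun v hv => ?_⟩
  have a1 := h ⟨v, hv⟩ ε (fun v => D v) hε.le (fun u hu w hw => by
    simpa using hD3 u (Finset.mem_image_of_mem _ (Finset.mem_union_right _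
        (Finset.mem_biUnion.2 ⟨_, Finset.mem_univ _, hu⟩)))
      w (Finset.mem_image_of_mem _ (Finset.mem_union_right _
        (Finset.mem_biUnion.2 ⟨_, Finset.mem_univ _, hw⟩)))) (b.constr ℝ (fun i => D (b i)))
      (fun i => by simp)
  have hm : (v : X) ∈ (V ∪ Finset.univ.biUnion W).image (fun v : F => (v : X)) :=
    Finset.mem_image_of_mem _ (Finset.mem_union_left _ hv)
  have a2 := hD1 _ hm
  have a3 := hD2 _ hm
  simp only at a1
  set t := b.constr ℝ (fun i => D (b i)) v
  have a4 : C ⟨v, hv⟩ * ε ≤ A * ε := by gcongr; exact hC' _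
  have a5 := norm_le_norm_add_norm_sub' t (D v)
  have a6 := norm_le_norm_add_norm_sub' (D v) t
  rw [norm_sub_rev] at a6
  simp only [Submodule.coe_norm] at *
  constructor <;> linarith

lemma finrep (f : X → Y) (L : ℝ) (hL : 1 ≤ L)
    (h1 : ∀ x y, ‖f x - f y‖ ≤ L * ‖x - y‖ + L)
    (h2 : ∀ x y, ‖x - y‖ ≤ L * ‖f x - f y‖ + L) : FinitelyRepresentable X Y := by
  refine ⟨8 * L ^ 2, by nlinarith, fun F hF => ?_⟩
  have b := Module.finBasis ℝ F
  set E := ∑ i, ‖b i‖ with hE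
  have hE0 : 0 ≤ E := Finset.sum_nonneg fun _ _ => norm_nonneg _
  set M : ℝ := 2 * (E + L + 4 * L ^ 2 * E) + 2 with hM
  have hLE : 0 ≤ L ^ 2 * E := by positivity
  have hMpos : 0 < M := by nlinarith
  have hfin : (Metric.closedBall (0 : F) (M + E) ∩
      (Submodule.span ℤ (Set.range b) : Set F)).Finite :=
    ZSpan.setFinite_inter b Metric.isBounded_closedBall
  obtain ⟨T, hT⟩ := exists_T f L hL h1 h2 F b hfin.toFinset (fun v hv => by
    rw [Set.Finite.mem_toFinset] at hv
    rw [← Submodule.span_int_eq_addSubgroupClosure]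
    exact hv.2)
  set T' : F →L[ℝ] Y := T.toContinuousLinearMap with hT'
  have key : ∀ u : F, ‖u‖ = 1 → ∃ v : F, ‖M • u - v‖ ≤ E ∧
      ‖T' v‖ ≤ L * ‖v‖ + L + 1 ∧ ‖v‖ / L - 1 ≤ ‖T' v‖ := by
    intro u hu
    refine ⟨ZSpan.floor b (M • u), ?_⟩
    have a1 : ‖M • u - (ZSpan.floor b (M • u) : F)‖ ≤ E := ZSpan.norm_fract_le b (M • u)
    refine ⟨a1, hT _ ?_⟩
    rw [Set.Finite.mem_toFinset]
    refine ⟨?_, (ZSpan.floor b (M • u)).2⟩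
    rw [mem_closedBall_zero_iff]
    have a2 := norm_le_norm_add_norm_sub (M • u) (ZSpan.floor b (M • u) : F)
    rw [norm_smul, hu, Real.norm_of_nonneg hMpos.le] at a2
    linarith
  have hup : ‖T'‖ ≤ 4 * L := by
    have : ‖T'‖ ≤ (L * (M + E) + L + 1 + ‖T'‖ * E) / M := by
      refine ContinuousLinearMap.opNorm_le_of_unit_norm (by positivity) fun u hu => ?_
      obtain ⟨v, a1, a2, a3⟩ := key u hu
      have a4 : ‖v‖ ≤ M + E := by
        have a2 := norm_le_norm_add_norm_sub (M • u) v
        rw [norm_smul, hu, Real.norm_of_nonneg hMpos.le] at a2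
        linarith
      rw [le_div_iff₀ hMpos]
      have a5 : ‖T' (M • u)‖ = ‖T' u‖ * M := by
        rw [map_smul, norm_smul, Real.norm_of_nonneg hMpos.le, mul_comm]
      rw [← a5]
      have a6 := norm_le_norm_add_norm_sub' (T' (M • u)) (T' v)
      rw [← map_sub] at a6
      have a7 := T'.le_opNorm (M • u - v)
      have a8 : ‖T'‖ * ‖M • u - v‖ ≤ ‖T'‖ * E := by gcongr
      have a9 : L * ‖v‖ ≤ L * (M + E) := by gcongr
      linarith
    rw [le_div_iff₀ hMpos] at this
    have hME : 0 < M - E := by nlinarith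
    have : ‖T'‖ * (M - E) ≤ 4 * L * (M - E) := by
      have : 5 * E + 2 ≤ 3 * M := by nlinarith
      nlinarith
    exact le_of_mul_le_mul_right this hME
  have hlow : ∀ u : F, ‖u‖ = 1 → 1 ≤ 2 * L * ‖T' u‖ := by
    intro u hu
    obtain ⟨v, a1, a2, a3⟩ := key u hu
    have a4 : M - E ≤ ‖v‖ := by
      have a2 := norm_le_norm_add_norm_sub' (M • u) v
      rw [norm_smul, hu, Real.norm_of_nonneg hMpos.le] at a2
      linarith
    have a5 : ‖T' (M • u)‖ = ‖T' u‖ * M := by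
      rw [map_smul, norm_smul, Real.norm_of_nonneg hMpos.le, mul_comm]
    have a6 := norm_le_norm_add_norm_sub (T' (M • u)) (T' v)
    rw [← map_sub] at a6
    have a7 := T'.le_opNorm (M • u - v)
    have a8 : ‖T'‖ * ‖M • u - v‖ ≤ 4 * L * E := by gcongr
    have a9 : (M - E) / L ≤ ‖v‖ / L := by gcongr
    have a10 : (M - E) / L ≤ ‖T' u‖ * M + 4 * L * E + 1 := by linarith
    rw [div_le_iff₀ (by linarith)] at a10
    have a11 : M ≤ (2 * L * ‖T' u‖) * M := by nlinarith
    by_contra hcon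
    push Not at hcon
    nlinarith
  refine ⟨(2 * L) • T, fun x => ?_⟩
  have hx2 : ‖T' x‖ ≤ 4 * L * ‖x‖ := T'.le_of_opNorm_le hup x
  have e : ‖((2 * L) • T) x‖ = 2 * L * ‖T' x‖ := by
    rw [LinearMap.smul_apply, norm_smul, Real.norm_of_nonneg (by positivity)]; rfl
  rw [e]
  constructor
  · rcases eq_or_ne x 0 with rfl | hx
    · simp
    have hn : 0 < ‖x‖ := norm_pos_iff.2 hx
    have := hlow (‖x‖⁻¹ • x) (by rw [norm_smul, norm_inv, norm_norm, inv_mul_cancel₀ hn.ne'])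
    rw [map_smul, norm_smul, norm_inv, norm_norm, mul_left_comm, le_inv_mul_iff₀ hn] at this
    linarith
  · nlinarith

lemma coarse (f : X → Y) (hf : UniformContinuous f) :
    ∃ L : ℝ, 1 ≤ L ∧ ∀ x y, ‖f x - f y‖ ≤ L * ‖x - y‖ + L := by
  obtain ⟨δ, hδ, h⟩ := Metric.uniformContinuous_iff.1 hf 1 one_pos
  have step : ∀ n : ℕ, ∀ x v : X, ‖v‖ < δ → ‖f (x + n • v) - f x‖ ≤ n := by
    intro n x v hv
    induction n with
    | zero => simp
    | succ n ih =>
      have a1 : dist (f (x + (n + 1) • v)) (f (x + n • v)) < 1 := by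
        apply h
        rw [dist_eq_norm, add_smul, one_smul]
        simpa using hv
      rw [dist_eq_norm] at a1
      have := norm_sub_le_norm_sub_add_norm_sub (f (x + (n + 1) • v)) (f (x + n • v)) (f x)
      push_cast
      linarith
  refine ⟨max 1 δ⁻¹, le_max_left _ _, fun x y => ?_⟩
  set n := ⌊‖x - y‖ / δ⌋₊ + 1 with hn
  have hn0 : (0 : ℝ) < n := by positivity
  have hlt : ‖x - y‖ / δ < n := by rw [hn]; push_cast; exact Nat.lt_floor_add_one _
  have a1 := step n y ((n : ℝ)⁻¹ • (x - y)) (by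
    rw [norm_smul, norm_inv, Real.norm_natCast, inv_mul_lt_iff₀ hn0]
    rwa [div_lt_iff₀ hδ] at hlt)
  rw [← Nat.cast_smul_eq_nsmul ℝ, smul_inv_smul₀ hn0.ne', add_sub_cancel] at a1
  have a2 : (n : ℝ) ≤ ‖x - y‖ / δ + 1 := by
    rw [hn]; push_cast
    have := Nat.floor_le (a := ‖x - y‖ / δ) (by positivity)
    linarith
  have a3 : ‖x - y‖ / δ ≤ max 1 δ⁻¹ * ‖x - y‖ := by
    rw [div_eq_inv_mul]
    gcongr
    exact le_max_right _ _
  have a4 := le_max_left 1 δ⁻¹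
  linarith

lemma main (f : X → Y) (g : Y → X) (hgf : Function.LeftInverse g f)
    (hf : UniformContinuous f) (hg : UniformContinuous g) : FinitelyRepresentable X Y := by
  obtain ⟨L, hL, h1⟩ := coarse f hf
  obtain ⟨L', hL', h2⟩ := coarse g hg
  refine finrep f (max L L') (hL.trans (le_max_left _ _)) (fun x y => (h1 x y).trans ?_)
    (fun x y => ?_)
  · have := le_max_left L L'
    gcongr
  · have := h2 (f x) (f y)
    rw [hgf, hgf] at this
    refine this.trans ?_
    have := le_max_right L L'
    gcongr

end core
end Ribe

/-- **Ribe's rigidity theorem.** If `X` and `Y` are uniformly homeomorphic Banach spaces, then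
`X` is finitely representable in `Y` and `Y` is finitely representable in `X`. -/
theorem ribe_rigidity (X Y : Type*) [NormedAddCommGroup X] [NormedSpace ℝ X] [CompleteSpace X]
    [NormedAddCommGroup Y] [NormedSpace ℝ Y] [CompleteSpace Y]
    (f : X → Y) (g : Y → X) (hgf : Function.LeftInverse g f) (hfg : Function.RightInverse g f)
    (hf : UniformContinuous f) (hg : UniformContinuous g) :
    FinitelyRepresentable X Y ∧ FinitelyRepresentable Y X := by
  exact ⟨Ribe.main f g hgf hf hg, Ribe.main g f hfg hg hf⟩
end

section
/- There exists a universal constant C ∈ (0,∞) such that for every Banach space (X,‖·‖_X), every q ∈ [1,∞), every integer n ≥ 2, and every f : {−1,1}^n → X, one has (E_ε[‖f(ε) − E_δ[f(δ)]‖_X^q])^{1/q} ≤ C (log n) (E_ε E_δ[‖Σ_{i=1}^n δ_i ∂_i f(ε)‖_X^q])^{1/q}, where ε and δ are independent and uniformly distributed over {−1,1}^n (Pisier's inequality). -/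
open scoped BigOperators

universe u

/-- The real sign `±1` associated to a Boolean coordinate of the discrete cube `{-1,1}ⁿ`. -/
noncomputable def rsign (b : Bool) : ℝ := if b then 1 else -1

/-- The `j`-th partial difference operator
`∂ⱼ f(ε) = (f(ε) - f(ε₁,…,ε_{j-1},-ε_j,ε_{j+1},…,ε_n))/2` on the discrete cube. -/
noncomputable def discDeriv {X : Type u} [NormedAddCommGroup X] [NormedSpace ℝ X] {n : ℕ}
    (f : (Fin n → Bool) → X) (j : Fin n) (ε : Fin n → Bool) : X :=
  (2 : ℝ)⁻¹ • (f ε - f (Function.update ε j (!ε j)))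

section PisierHelpers

/-- Multiply `ε` by `δ` on the coordinates in `A`. -/
def cmul {n : ℕ} (A : Finset (Fin n)) (δ ε : Fin n → Bool) : Fin n → Bool :=
  fun i => if i ∈ A then (if δ i then ε i else !ε i) else ε i

lemma cmul_invol {n : ℕ} (A : Finset (Fin n)) (δ : Fin n → Bool) :
    Function.Involutive (cmul A δ) := by
  intro ε
  funext i
  simp only [cmul]
  by_cases h : i ∈ A <;> cases δ i <;> simp [h]

lemma sum_cmul {n : ℕ} {M : Type*} [AddCommMonoid M] (A : Finset (Fin n)) (δ : Fin n → Bool)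
    (F : (Fin n → Bool) → M) : ∑ ε, F (cmul A δ ε) = ∑ ε, F ε :=
  Equiv.sum_comp (cmul_invol A δ).toPerm F

lemma cmul_comm_univ {n : ℕ} (δ ε : Fin n → Bool) :
    cmul Finset.univ δ ε = cmul Finset.univ ε δ := by
  funext i
  simp only [cmul]
  cases δ i <;> cases ε i <;> simp

/-- flip coordinate -/
def cflip {n : ℕ} (i : Fin n) (δ : Fin n → Bool) : Fin n → Bool :=
  Function.update δ i (!δ i)

lemma cflip_invol {n : ℕ} (i : Fin n) : Function.Involutive (cflip i) := by
  intro δ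
  simp [cflip]

lemma sum_cflip {n : ℕ} {M : Type*} [AddCommMonoid M] (i : Fin n)
    (F : (Fin n → Bool) → M) : ∑ ε, F (cflip i ε) = ∑ ε, F ε :=
  Equiv.sum_comp (cflip_invol i).toPerm F

lemma cflip_cmul {n : ℕ} (A : Finset (Fin n)) (i : Fin n) (hi : i ∈ A) (δ ε : Fin n → Bool) :
    cflip i (cmul A δ ε) = cmul A (cflip i δ) ε := by
  funext j
  by_cases h : j = i
  · subst h
    cases hd : δ j <;> simp [cflip, cmul, hi, hd]
  · simp [cflip, cmul, h]

lemma cmul_erase_true {n : ℕ} (A : Finset (Fin n)) (i : Fin n) (δ ε : Fin n → Bool)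
    (h : δ i = true) : cmul (A.erase i) δ ε = cmul A δ ε := by
  funext j
  by_cases hj : j = i
  · subst hj
    simp [cmul, h]
  · simp [cmul, hj]

lemma cmul_erase_false {n : ℕ} (A : Finset (Fin n)) (i : Fin n) (δ ε : Fin n → Bool)
    (h : δ i = false) : cmul (A.erase i) δ ε = cmul A (cflip i δ) ε := by
  funext j
  by_cases hj : j = i
  · subst hj
    simp [cmul, cflip, h]
  · simp [cmul, cflip, hj]

variable {X : Type u} [NormedAddCommGroup X] [NormedSpace ℝ X]

/-- averaging over the coordinates in `A` -/
noncomputable def cavg {n : ℕ} (A : Finset (Fin n)) (f : (Fin n → Bool) → X)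
    (ε : Fin n → Bool) : X := ((2 : ℝ) ^ n)⁻¹ • ∑ δ : Fin n → Bool, f (cmul A δ ε)

lemma card_cube (n : ℕ) : ((Finset.univ : Finset (Fin n → Bool)).card : ℝ) = 2 ^ n := by
  simp

lemma cavg_empty {n : ℕ} (f : (Fin n → Bool) → X) : cavg ∅ f = f := by
  funext ε
  have h : ∀ δ : Fin n → Bool, cmul ∅ δ ε = ε := fun δ => by funext i; simp [cmul]
  simp only [cavg, h, Finset.sum_const, ← Nat.cast_smul_eq_nsmul ℝ, card_cube, smul_smul]
  rw [inv_mul_cancel₀ (by positivity), one_smul]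

lemma cavg_univ {n : ℕ} (f : (Fin n → Bool) → X) (ε : Fin n → Bool) :
    cavg Finset.univ f ε = ((2 : ℝ) ^ n)⁻¹ • ∑ δ : Fin n → Bool, f δ := by
  simp only [cavg, cmul_comm_univ _ ε]
  rw [sum_cmul]

lemma cavg_diff {n : ℕ} (A : Finset (Fin n)) (i : Fin n) (hi : i ∈ A)
    (f : (Fin n → Bool) → X) (ε : Fin n → Bool) :
    cavg (A.erase i) f ε - cavg A f ε =
      ((2 : ℝ) ^ n)⁻¹ • ∑ δ : Fin n → Bool, rsign (δ i) • discDeriv f i (cmul A δ ε) := by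
  have key : ∀ δ : Fin n → Bool, rsign (δ i) • discDeriv f i (cmul A δ ε) =
      f (cmul (A.erase i) δ ε) - (2 : ℝ)⁻¹ • (f (cmul A δ ε) + f (cmul A (cflip i δ) ε)) := by
    intro δ
    have h1 : discDeriv f i (cmul A δ ε) =
        (2 : ℝ)⁻¹ • (f (cmul A δ ε) - f (cmul A (cflip i δ) ε)) := by
      rw [← cflip_cmul A i hi]; rfl
    rw [h1]
    cases h : δ i
    · rw [cmul_erase_false A i δ ε h]
      simp only [rsign]
      simp
      module
    · rw [cmul_erase_true A i δ ε h]
      simp only [rsign]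
      simp
      module
  simp only [key, cavg, Finset.sum_sub_distrib, ← Finset.smul_sum, Finset.sum_add_distrib]
  rw [sum_cflip i (fun δ => f (cmul A δ ε))]
  module

/-- normalized L^q norm -/
noncomputable def cnorm {n : ℕ} (q : ℝ) (g : (Fin n → Bool) → X) : ℝ :=
  (((2 : ℝ) ^ n)⁻¹ * ∑ ε : Fin n → Bool, ‖g ε‖ ^ q) ^ (1 / q)

lemma cnorm_add {n : ℕ} {q : ℝ} (hq : 1 ≤ q) (g h : (Fin n → Bool) → X) :
    cnorm q (g + h) ≤ cnorm q g + cnorm q h := by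
  have hc : (0 : ℝ) ≤ ((2 : ℝ) ^ n)⁻¹ := by positivity
  have hs : ∀ g : (Fin n → Bool) → X, 0 ≤ ∑ ε : Fin n → Bool, ‖g ε‖ ^ q :=
    fun g => Finset.sum_nonneg fun ε _ => by positivity
  unfold cnorm
  rw [Real.mul_rpow hc (hs _), Real.mul_rpow hc (hs _), Real.mul_rpow hc (hs _), ← mul_add]
  apply mul_le_mul_of_nonneg_left _ (by positivity)
  refine le_trans ?_ (Real.Lp_add_le_of_nonneg Finset.univ hq
    (f := fun ε => ‖g ε‖) (g := fun ε => ‖h ε‖) (fun _ _ => norm_nonneg _)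
    (fun _ _ => norm_nonneg _))
  apply Real.rpow_le_rpow (hs _) _ (by positivity)
  apply Finset.sum_le_sum
  intro ε _
  exact Real.rpow_le_rpow (norm_nonneg _) (norm_add_le _ _) (by linarith)

lemma cnorm_smul {n : ℕ} {q : ℝ} (hq : 1 ≤ q) (c : ℝ) (hc : 0 ≤ c) (g : (Fin n → Bool) → X) :
    cnorm q (c • g) = c * cnorm q g := by
  have hs : 0 ≤ ((2 : ℝ) ^ n)⁻¹ * ∑ ε : Fin n → Bool, ‖g ε‖ ^ q :=
    mul_nonneg (by positivity) (Finset.sum_nonneg fun ε _ => by positivity)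
  have h : ((2 : ℝ) ^ n)⁻¹ * ∑ ε : Fin n → Bool, ‖(c • g) ε‖ ^ q =
      c ^ q * (((2 : ℝ) ^ n)⁻¹ * ∑ ε : Fin n → Bool, ‖g ε‖ ^ q) := by
    rw [mul_left_comm, Finset.mul_sum _ _ (c ^ q)]
    congr 1
    apply Finset.sum_congr rfl
    intro ε _
    rw [Pi.smul_apply, norm_smul, Real.norm_of_nonneg hc, Real.mul_rpow hc (norm_nonneg _)]
  unfold cnorm
  rw [h, Real.mul_rpow (by positivity) hs, ← Real.rpow_mul hc, mul_one_div_cancel (by linarith),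
    Real.rpow_one]

lemma cnorm_sum {n : ℕ} {q : ℝ} (hq : 1 ≤ q) {ι : Type*} (s : Finset ι)
    (g : ι → (Fin n → Bool) → X) :
    cnorm q (∑ i ∈ s, g i) ≤ ∑ i ∈ s, cnorm q (g i) := by
  apply Finset.le_sum_of_subadditive (cnorm q)
  · have := cnorm_smul (n := n) (X := X) hq 0 le_rfl 0
    simp only [zero_smul, zero_mul] at this
    exact this.le
  · exact cnorm_add hq

lemma contraction {n : ℕ} {q : ℝ} (hq : 1 ≤ q) (A : Finset (Fin n)) (v : Fin n → X) :
    ∑ δ : Fin n → Bool, ‖∑ i ∈ A, rsign (δ i) • v i‖ ^ q ≤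
      ∑ δ : Fin n → Bool, ‖∑ i, rsign (δ i) • v i‖ ^ q := by
  set e : Fin n → Bool := fun _ => false
  have h1 : ∀ δ : Fin n → Bool, ∑ i ∈ A, rsign (δ i) • v i =
      (2 : ℝ)⁻¹ • (∑ i, rsign (δ i) • v i) + (2 : ℝ)⁻¹ • (∑ i, rsign (cmul Aᶜ e δ i) • v i) := by
    intro δ
    rw [← smul_add, ← Finset.sum_add_distrib, Finset.smul_sum, ← Finset.sum_subset A.subset_univ]
    · apply Finset.sum_congr rfl
      intro i hi
      simp [cmul, hi]
      module
    · intro i _ hi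
      cases h : δ i <;> simp [cmul, hi, rsign, e, h]
  have h2 : ∀ δ : Fin n → Bool, ‖∑ i ∈ A, rsign (δ i) • v i‖ ^ q ≤
      (2 : ℝ)⁻¹ * ‖∑ i, rsign (δ i) • v i‖ ^ q +
        (2 : ℝ)⁻¹ * ‖∑ i, rsign (cmul Aᶜ e δ i) • v i‖ ^ q := by
    intro δ
    have hcv := (convexOn_rpow hq).2 (Set.mem_Ici.2 (norm_nonneg (∑ i, rsign (δ i) • v i)))
      (Set.mem_Ici.2 (norm_nonneg (∑ i, rsign (cmul Aᶜ e δ i) • v i)))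
      (show (0 : ℝ) ≤ 2⁻¹ by norm_num) (show (0 : ℝ) ≤ 2⁻¹ by norm_num) (by norm_num)
    simp only [smul_eq_mul] at hcv
    refine le_trans (Real.rpow_le_rpow (norm_nonneg _) ?_ (by linarith)) hcv
    rw [h1 δ]
    refine (norm_add_le _ _).trans (le_of_eq ?_)
    rw [norm_smul, norm_smul]
    norm_num
  refine (Finset.sum_le_sum fun δ _ => h2 δ).trans (le_of_eq ?_)
  rw [Finset.sum_add_distrib, ← Finset.mul_sum, ← Finset.mul_sum,
    sum_cmul Aᶜ e (fun δ => ‖∑ i, rsign (δ i) • v i‖ ^ q)]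
  ring

/-- right hand side -/
noncomputable def crhs {n : ℕ} (q : ℝ) (f : (Fin n → Bool) → X) : ℝ :=
  (((2 : ℝ) ^ n)⁻¹ * ∑ ε : Fin n → Bool, ((2 : ℝ) ^ n)⁻¹ * ∑ δ : Fin n → Bool,
                ‖∑ i : Fin n, rsign (δ i) • discDeriv f i ε‖ ^ q) ^ (1 / q)

lemma key_bound {n : ℕ} {q : ℝ} (hq : 1 ≤ q) (A : Finset (Fin n)) (f : (Fin n → Bool) → X) :
    cnorm q (∑ i ∈ A, (cavg (A.erase i) f - cavg A f)) ≤ crhs q f := by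
  have hc : (0 : ℝ) ≤ ((2 : ℝ) ^ n)⁻¹ := by positivity
  unfold cnorm crhs
  apply Real.rpow_le_rpow
    (mul_nonneg hc (Finset.sum_nonneg fun ε _ => by positivity)) _ (by positivity)
  apply mul_le_mul_of_nonneg_left _ hc
  have h1 : ∀ ε, (∑ i ∈ A, (cavg (A.erase i) f - cavg A f)) ε =
      ((2 : ℝ) ^ n)⁻¹ • ∑ δ : Fin n → Bool, ∑ i ∈ A,
        rsign (δ i) • discDeriv f i (cmul A δ ε) := by
    intro ε
    rw [Finset.sum_apply, Finset.sum_comm, Finset.smul_sum]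
    exact Finset.sum_congr rfl fun i hi => cavg_diff A i hi f ε
  have h2 : ∀ ε, ‖(∑ i ∈ A, (cavg (A.erase i) f - cavg A f)) ε‖ ^ q ≤
      ∑ δ : Fin n → Bool, ((2 : ℝ) ^ n)⁻¹ *
        ‖∑ i ∈ A, rsign (δ i) • discDeriv f i (cmul A δ ε)‖ ^ q := by
    intro ε
    refine le_trans ?_ (Real.rpow_arith_mean_le_arith_mean_rpow Finset.univ
      (fun _ => ((2 : ℝ) ^ n)⁻¹)
      (fun δ => ‖∑ i ∈ A, rsign (δ i) • discDeriv f i (cmul A δ ε)‖)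
      (fun _ _ => hc) ?_ (fun _ _ => norm_nonneg _) hq)
    · apply Real.rpow_le_rpow (norm_nonneg _) _ (by linarith)
      rw [h1, norm_smul, Real.norm_of_nonneg hc, ← Finset.mul_sum]
      exact mul_le_mul_of_nonneg_left (norm_sum_le _ _) hc
    · rw [Finset.sum_const, nsmul_eq_mul, card_cube]
      exact mul_inv_cancel₀ (by positivity)
  refine (Finset.sum_le_sum fun ε _ => h2 ε).trans ?_
  rw [Finset.sum_comm]
  have h3 : ∀ δ : Fin n → Bool, ∑ ε : Fin n → Bool, ((2 : ℝ) ^ n)⁻¹ *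
        ‖∑ i ∈ A, rsign (δ i) • discDeriv f i (cmul A δ ε)‖ ^ q =
      ∑ ε : Fin n → Bool, ((2 : ℝ) ^ n)⁻¹ *
        ‖∑ i ∈ A, rsign (δ i) • discDeriv f i ε‖ ^ q := fun δ =>
    sum_cmul A δ (fun ε => ((2 : ℝ) ^ n)⁻¹ * ‖∑ i ∈ A, rsign (δ i) • discDeriv f i ε‖ ^ q)
  rw [Finset.sum_congr rfl fun δ _ => h3 δ, Finset.sum_comm]
  apply Finset.sum_le_sum
  intro ε _
  rw [← Finset.mul_sum]
  exact mul_le_mul_of_nonneg_left (contraction hq A fun i => discDeriv f i ε) hc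

lemma main_bound {n : ℕ} {q : ℝ} (hq : 1 ≤ q) (f : (Fin n → Bool) → X) (k : ℕ) :
    ∀ A : Finset (Fin n), A.card = k →
      cnorm q (f - cavg A f) ≤ (harmonic k : ℝ) * crhs q f := by
  induction k with
  | zero =>
    intro A hA
    rw [Finset.card_eq_zero] at hA
    subst hA
    rw [cavg_empty, sub_self]
    have := cnorm_smul (n := n) (X := X) hq 0 le_rfl 0
    simp at this
    simp [this]
  | succ k ih =>
    intro A hA
    have hk : ((k : ℝ) + 1) ≠ 0 := by positivity
    have hk0 : (0 : ℝ) ≤ ((k : ℝ) + 1)⁻¹ := by positivity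
    have hdec : f - cavg A f = ((k : ℝ) + 1)⁻¹ • ((∑ i ∈ A, (f - cavg (A.erase i) f)) +
        ∑ i ∈ A, (cavg (A.erase i) f - cavg A f)) := by
      rw [← Finset.sum_add_distrib]
      simp only [sub_add_sub_cancel, Finset.sum_const, hA]
      rw [← Nat.cast_smul_eq_nsmul ℝ, smul_smul]
      push_cast
      rw [inv_mul_cancel₀ hk, one_smul]
    rw [hdec, cnorm_smul hq _ hk0]
    have h1 : cnorm q (∑ i ∈ A, (f - cavg (A.erase i) f)) ≤
        ((k : ℝ) + 1) * ((harmonic k : ℝ) * crhs q f) := by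
      refine (cnorm_sum hq _ _).trans ?_
      refine (Finset.sum_le_card_nsmul A _ ((harmonic k : ℝ) * crhs q f) ?_).trans (le_of_eq ?_)
      · intro i hi
        exact ih _ (by rw [Finset.card_erase_of_mem hi, hA]; rfl)
      · rw [hA, nsmul_eq_mul]; push_cast; rfl
    have h2 := key_bound hq A f
    have h3 := (cnorm_add hq _ _).trans (add_le_add h1 h2)
    refine (mul_le_mul_of_nonneg_left h3 hk0).trans (le_of_eq ?_)
    rw [harmonic_succ]
    push_cast
    field_simp

end PisierHelpers

/-- **Pisier's inequality.** There is a universal constant `C > 0` such that for every Banach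
space `X`, every `q ∈ [1,∞)`, every integer `n ≥ 2` and every `f : {-1,1}ⁿ → X`,
`(𝔼_ε ‖f(ε) - 𝔼_δ f(δ)‖^q)^{1/q} ≤ C (log n) (𝔼_ε 𝔼_δ ‖∑ᵢ δᵢ ∂ᵢ f(ε)‖^q)^{1/q}`. -/
theorem pisier_inequality :
    ∃ C : ℝ, 0 < C ∧
      ∀ (X : Type u) [NormedAddCommGroup X] [NormedSpace ℝ X] [CompleteSpace X],
        ∀ q : ℝ, 1 ≤ q → ∀ n : ℕ, 2 ≤ n → ∀ f : (Fin n → Bool) → X,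
          (((2 : ℝ) ^ n)⁻¹ * ∑ ε : Fin n → Bool,
              ‖f ε - ((2 : ℝ) ^ n)⁻¹ • ∑ δ : Fin n → Bool, f δ‖ ^ q) ^ (1 / q) ≤
            C * Real.log (n : ℝ) *
              (((2 : ℝ) ^ n)⁻¹ * ∑ ε : Fin n → Bool, ((2 : ℝ) ^ n)⁻¹ * ∑ δ : Fin n → Bool,
                ‖∑ i : Fin n, rsign (δ i) • discDeriv f i ε‖ ^ q) ^ (1 / q) := by
  refine ⟨3, by norm_num, ?_⟩
  intro X _ _ _ q hq n hn f
  have h := main_bound hq f n Finset.univ (by simp)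
  have hR : 0 ≤ crhs q f := by
    unfold crhs
    positivity
  have h2 : (harmonic n : ℝ) ≤ 3 * Real.log n := by
    have h3 := harmonic_le_one_add_log n
    have h4 : Real.log 2 ≤ Real.log n := Real.log_le_log (by norm_num) (by exact_mod_cast hn)
    have h5 := Real.log_two_gt_d9
    linarith
  have h6 := h.trans (mul_le_mul_of_nonneg_right h2 hR)
  simpa only [cnorm, crhs, Pi.sub_apply, cavg_univ] using h6
end

section
/- For every Banach space (X,‖·‖_X), every n ∈ ℕ, every f : {−1,1}^n → X, and every s > 0, one has E_ε[‖f(ε) − E_δ[f(δ)]‖_X] ≤ e^{ns} · log(e^s/(e^s − 1)) · E_ε E_δ[‖Σ_{i=1}^n δ_i ∂_i f(ε)‖_X], where ε and δ are independent and uniformly distributed over {−1,1}^n. -/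
open scoped BigOperators

universe u

namespace PisierAux

def xr {n : ℕ} (ε η : Fin n → Bool) : Fin n → Bool := fun i => xor (ε i) (η i)

noncomputable def sg (b : Bool) : ℝ := if b then -1 else 1

noncomputable def pk (ρ : ℝ) (b : Bool) : ℝ := (1 + sg b * ρ) / 2

noncomputable def wk (ρ : ℝ) (d b : Bool) : ℝ :=
  if d then (if b then 0 else 1 / 2) else (if b then (1 - ρ) / 2 else ρ / 2)

noncomputable def PP {X : Type u} [NormedAddCommGroup X] [NormedSpace ℝ X] {n : ℕ}
    (ρ : ℝ) (f : (Fin n → Bool) → X) (ε : Fin n → Bool) : X :=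
  ∑ η : Fin n → Bool, (∏ i, pk ρ (η i)) • f (xr ε η)

variable {X : Type u} [NormedAddCommGroup X] [NormedSpace ℝ X] {n : ℕ}

lemma xr_comm (a b : Fin n → Bool) : xr a b = xr b a := by
  funext i; simp [xr, Bool.xor_comm]

lemma xr_assoc (a b c : Fin n → Bool) : xr (xr a b) c = xr a (xr b c) := by
  funext i; simp [xr]

lemma xr_self (a b : Fin n → Bool) : xr a (xr a b) = b := by
  funext i; simp [xr]

lemma sum_xr {M : Type*} [AddCommMonoid M] (η : Fin n → Bool) (g : (Fin n → Bool) → M) :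
    ∑ ε, g (xr η ε) = ∑ ε, g ε :=
  Equiv.sum_comp (Function.Involutive.toPerm (xr η) (xr_self η)) g

lemma sum_xr' {M : Type*} [AddCommMonoid M] (η : Fin n → Bool) (g : (Fin n → Bool) → M) :
    ∑ ε, g (xr ε η) = ∑ ε, g ε := by
  simp_rw [xr_comm _ η]; exact sum_xr η g

lemma sum_prod (g : Fin n → Bool → ℝ) :
    ∑ η : Fin n → Bool, ∏ i, g i (η i) = ∏ i, (g i true + g i false) := by
  have := (Fintype.prod_sum g).symm
  rw [this]; simp

lemma PP_PP (σ τ : ℝ) (f : (Fin n → Bool) → X) : PP σ (PP τ f) = PP (σ * τ) f := by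
  funext ε
  unfold PP
  simp_rw [Finset.smul_sum, smul_smul, xr_assoc]
  have h : ∀ x : Fin n → Bool, ∑ y : Fin n → Bool,
      ((∏ i, pk σ (x i)) * ∏ i, pk τ (y i)) • f (xr ε (xr x y)) =
      ∑ z : Fin n → Bool, ((∏ i, pk σ (x i)) * ∏ i, pk τ (xr x z i)) • f (xr ε z) := by
    intro x
    rw [← sum_xr x]
    simp_rw [xr_self]
  simp_rw [h]
  rw [Finset.sum_comm]
  refine Finset.sum_congr rfl fun z _ => ?_
  rw [← Finset.sum_smul]
  congr 1
  simp_rw [← Finset.prod_mul_distrib]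
  rw [show (∑ x : Fin n → Bool, ∏ i, pk σ (x i) * pk τ (xr x z i)) =
    ∑ x : Fin n → Bool, ∏ i, (fun i b => pk σ b * pk τ (xor b (z i))) i (x i) from rfl,
    sum_prod (fun i b => pk σ b * pk τ (xor b (z i)))]
  refine Finset.prod_congr rfl fun i _ => ?_
  cases z i <;> simp [pk, sg] <;> ring

lemma PP_one (f : (Fin n → Bool) → X) : PP 1 f = f := by
  funext ε
  unfold PP
  rw [Finset.sum_eq_single (fun _ => false)]
  · have : xr ε (fun _ => false) = ε := by funext i; simp [xr]
    rw [this]; simp [pk, sg]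
  · intro b _ hb
    obtain ⟨i, hi⟩ := Function.ne_iff.mp hb
    rw [Finset.prod_eq_zero (Finset.mem_univ i), zero_smul]
    have : b i = true := by simpa using hi
    simp [this, pk, sg]
  · simp

lemma PP_zero (f : (Fin n → Bool) → X) (ε : Fin n → Bool) :
    PP 0 f ε = ((2 : ℝ) ^ n)⁻¹ • ∑ δ : Fin n → Bool, f δ := by
  unfold PP
  simp only [pk, mul_zero, add_zero, Finset.prod_const, Finset.card_univ, Fintype.card_fin]
  rw [← Finset.smul_sum, sum_xr]
  simp

lemma PP_norm (σ : ℝ) (hσ : 1 ≤ σ) (f : (Fin n → Bool) → X) :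
    ∑ ε, ‖PP σ f ε‖ ≤ σ ^ n * ∑ ε, ‖f ε‖ := by
  calc ∑ ε, ‖PP σ f ε‖ ≤ ∑ ε, ∑ η : Fin n → Bool, (∏ i, |pk σ (η i)|) * ‖f (xr ε η)‖ := by
        refine Finset.sum_le_sum fun ε _ => (norm_sum_le _ _).trans (le_of_eq ?_)
        refine Finset.sum_congr rfl fun η _ => ?_
        rw [norm_smul, Real.norm_eq_abs, Finset.abs_prod]
    _ = σ ^ n * ∑ ε, ‖f ε‖ := by
        rw [Finset.sum_comm]
        simp_rw [← Finset.mul_sum]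
        have h : ∀ η : Fin n → Bool, ∑ ε, ‖f (xr ε η)‖ = ∑ ε, ‖f ε‖ :=
          fun η => sum_xr' η (fun ε => ‖f ε‖)
        simp_rw [h]
        rw [← Finset.sum_mul, sum_prod (fun _ b => |pk σ b|)]
        have : |pk σ true| + |pk σ false| = σ := by
          simp only [pk, sg]
          rw [abs_of_nonpos (by norm_num; linarith), abs_of_nonneg (by norm_num; linarith)]
          norm_num; ring
        simp [this]

lemma sub_PP (σ : ℝ) (f g : (Fin n → Bool) → X) : PP σ (f - g) = PP σ f - PP σ g := by
  funext ε; simp [PP, smul_sub]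

/-- derivative of the kernel -/
noncomputable def dk (ρ : ℝ) (η : Fin n → Bool) : ℝ :=
  ∑ i, (∏ j ∈ Finset.univ.erase i, pk ρ (η j)) * (sg (η i) / 2)

lemma hasDeriv_k (ρ : ℝ) (η : Fin n → Bool) :
    HasDerivAt (fun ρ => ∏ i, pk ρ (η i)) (dk ρ η) ρ := by
  have := HasDerivAt.fun_finsetProd (u := Finset.univ) (f := fun i ρ => pk ρ (η i))
    (f' := fun i => sg (η i) / 2) (x := ρ) (fun i _ => by
      have := (((hasDerivAt_id ρ).const_mul (sg (η i))).const_add 1).div_const 2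
      simpa [pk] using this)
  simpa [dk] using this

lemma inner_sum (ρ : ℝ) (η : Fin n → Bool) (i : Fin n) :
    ∑ δ : Fin n → Bool, (∏ j, wk ρ (δ j) (η j)) * rsign (δ i) =
      (1 - ρ) * ((∏ j ∈ Finset.univ.erase i, pk ρ (η j)) * (sg (η i) / 2)) := by
  have h : ∀ δ : Fin n → Bool, (∏ j, wk ρ (δ j) (η j)) * rsign (δ i) =
      ∏ j, (fun j b => wk ρ b (η j) * if j = i then rsign b else 1) j (δ j) := by
    intro δ
    simp only [Finset.prod_mul_distrib]
    rw [Finset.prod_ite_eq' Finset.univ i (fun j => rsign (δ j))]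
    simp
  rw [Finset.sum_congr rfl fun δ _ => h δ,
    sum_prod (fun j b => wk ρ b (η j) * if j = i then rsign b else 1), ← Finset.mul_prod_erase _ _ (Finset.mem_univ i)]
  have h2 : ∀ j ∈ Finset.univ.erase i, (wk ρ true (η j) * (if j = i then rsign true else 1) +
      wk ρ false (η j) * (if j = i then rsign false else 1)) = pk ρ (η j) := by
    intro j hj
    have : j ≠ i := Finset.ne_of_mem_erase hj
    simp only [this, if_false]
    cases η j <;> simp [wk, pk, sg] <;> ring
  rw [Finset.prod_congr rfl h2]
  have h3 : (wk ρ true (η i) * (if i = i then rsign true else 1) +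
      wk ρ false (η i) * (if i = i then rsign false else 1)) = (1 - ρ) * (sg (η i) / 2) := by
    cases η i <;> simp [wk, sg, rsign] <;> ring
  rw [h3]; ring

def fl (i : Fin n) (η : Fin n → Bool) : Fin n → Bool := Function.update η i (!η i)

lemma fl_fl (i : Fin n) (η : Fin n → Bool) : fl i (fl i η) = η := by
  simp [fl]

lemma sum_fl {M : Type*} [AddCommMonoid M] (i : Fin n) (g : (Fin n → Bool) → M) :
    ∑ ε, g (fl i ε) = ∑ ε, g ε :=
  Equiv.sum_comp (Function.Involutive.toPerm (fl i) (fl_fl i)) g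

lemma xr_fl (i : Fin n) (ε η : Fin n → Bool) : fl i (xr ε η) = xr ε (fl i η) := by
  funext j
  by_cases h : j = i
  · subst h; simp [fl, xr]
  · simp [fl, xr, h]

lemma deriv_id (ρ : ℝ) (f : (Fin n → Bool) → X) (ε : Fin n → Bool) :
    (1 - ρ) • ∑ η, dk ρ η • f (xr ε η) =
    ∑ δ : Fin n → Bool, ∑ η : Fin n → Bool, (∏ j, wk ρ (δ j) (η j)) •
      ∑ i, rsign (δ i) • discDeriv f i (xr ε η) := by
  have R : ∑ δ : Fin n → Bool, ∑ η : Fin n → Bool, (∏ j, wk ρ (δ j) (η j)) •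
      ∑ i, rsign (δ i) • discDeriv f i (xr ε η) =
      ∑ i, ∑ η : Fin n → Bool, ((1 - ρ) * ((∏ j ∈ Finset.univ.erase i, pk ρ (η j)) *
        (sg (η i) / 2))) • discDeriv f i (xr ε η) := by
    simp_rw [← inner_sum, Finset.smul_sum, Finset.sum_smul, smul_smul]
    rw [Finset.sum_comm]
    rw [Finset.sum_comm (s := (Finset.univ : Finset (Fin n)))]
    refine Finset.sum_congr rfl fun η _ => ?_
    rw [Finset.sum_comm]
  rw [R]
  simp_rw [dk, Finset.sum_smul]
  rw [Finset.sum_comm, Finset.smul_sum]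
  refine Finset.sum_congr rfl fun i _ => ?_
  simp_rw [← smul_smul (1 - ρ)]
  rw [← Finset.smul_sum]
  congr 1
  set c : (Fin n → Bool) → ℝ := fun η =>
    (∏ j ∈ Finset.univ.erase i, pk ρ (η j)) * (sg (η i) / 2) with hc
  have hcf : ∀ η, c (fl i η) = - c η := by
    intro η
    have h1 : ∏ j ∈ Finset.univ.erase i, pk ρ (fl i η j) =
        ∏ j ∈ Finset.univ.erase i, pk ρ (η j) := by
      refine Finset.prod_congr rfl fun j hj => ?_
      simp [fl, Finset.ne_of_mem_erase hj]
    have h2 : sg (fl i η i) = - sg (η i) := by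
      cases h : η i <;> simp [fl, sg, h]
    simp only [hc, h1, h2]; ring
  change ∑ η, c η • f (xr ε η) = ∑ η, c η • discDeriv f i (xr ε η)
  have hd : ∀ η, discDeriv f i (xr ε η) = (2:ℝ)⁻¹ • (f (xr ε η) - f (xr ε (fl i η))) := by
    intro η; rw [← xr_fl]; rfl
  have e : ∑ η, c η • f (xr ε (fl i η)) = - ∑ η, c η • f (xr ε η) := by
    rw [← sum_fl i, ← Finset.sum_neg_distrib]
    simp_rw [hcf, fl_fl, neg_smul]
  simp_rw [hd, smul_comm (_ : ℝ) (2:ℝ)⁻¹, smul_sub]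
  rw [Finset.sum_sub_distrib]
  simp_rw [← Finset.smul_sum]
  rw [e, ← smul_sub, sub_neg_eq_add, ← two_smul ℝ, smul_smul]
  norm_num

noncomputable def CC (f : (Fin n → Bool) → X) : ℝ :=
  ∑ ε : Fin n → Bool, ((2 : ℝ) ^ n)⁻¹ * ∑ δ : Fin n → Bool,
          ‖∑ i : Fin n, rsign (δ i) • discDeriv f i ε‖

lemma deriv_bound (ρ : ℝ) (h0 : 0 ≤ ρ) (h1 : ρ < 1) (f : (Fin n → Bool) → X) :
    ∑ ε, ‖∑ η, dk ρ η • f (xr ε η)‖ ≤ CC f * (1 - ρ)⁻¹ := by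
  have hp : 0 < 1 - ρ := by linarith
  rw [← div_eq_mul_inv, le_div_iff₀ hp, mul_comm, Finset.mul_sum]
  have hw : ∀ d b, 0 ≤ wk ρ d b := by
    intro d b; cases d <;> cases b <;> simp [wk] <;> linarith
  calc ∑ ε, (1 - ρ) * ‖∑ η, dk ρ η • f (xr ε η)‖
      = ∑ ε, ‖(1 - ρ) • ∑ η, dk ρ η • f (xr ε η)‖ := by
        refine Finset.sum_congr rfl fun ε _ => ?_
        rw [norm_smul, Real.norm_eq_abs, abs_of_pos hp]
    _ ≤ ∑ ε, ∑ δ : Fin n → Bool, ∑ η : Fin n → Bool, (∏ j, wk ρ (δ j) (η j)) *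
          ‖∑ i, rsign (δ i) • discDeriv f i (xr ε η)‖ := by
        refine Finset.sum_le_sum fun ε _ => ?_
        rw [deriv_id]
        refine (norm_sum_le _ _).trans (Finset.sum_le_sum fun δ _ => ?_)
        refine (norm_sum_le _ _).trans (Finset.sum_le_sum fun η _ => ?_)
        rw [norm_smul, Real.norm_eq_abs, abs_of_nonneg (Finset.prod_nonneg fun j _ => hw _ _)]
    _ = ∑ δ : Fin n → Bool, ∑ η : Fin n → Bool, (∏ j, wk ρ (δ j) (η j)) *
          ∑ ε, ‖∑ i, rsign (δ i) • discDeriv f i ε‖ := by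
        rw [Finset.sum_comm]
        refine Finset.sum_congr rfl fun δ _ => ?_
        rw [Finset.sum_comm]
        refine Finset.sum_congr rfl fun η _ => ?_
        rw [← Finset.mul_sum, sum_xr' η (fun ε => ‖∑ i, rsign (δ i) • discDeriv f i ε‖)]
    _ = CC f := by
        unfold CC
        rw [← Finset.mul_sum]
        conv_rhs => rw [Finset.sum_comm, Finset.mul_sum]
        refine Finset.sum_congr rfl fun δ _ => ?_
        rw [← Finset.sum_mul, sum_prod (fun j b => wk ρ (δ j) b)]
        congr 1
        have : ∀ j, wk ρ (δ j) true + wk ρ (δ j) false = 2⁻¹ := by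
          intro j; cases δ j <;> simp [wk] <;> ring
        simp [this]

lemma main_bound (r : ℝ) (h0 : 0 ≤ r) (h1 : r < 1) (f : (Fin n → Bool) → X) :
    ∑ ε, ‖PP r f ε - PP 0 f ε‖ ≤ CC f * (- Real.log (1 - r)) := by
  let V : (Fin n → Bool) → PiLp 1 (fun _ : Fin n → Bool => X) := fun η =>
    WithLp.toLp 1 (fun ε => f (xr ε η))
  let G : ℝ → PiLp 1 (fun _ : Fin n → Bool => X) := fun ρ => ∑ η, (∏ i, pk ρ (η i)) • V η
  let G' : ℝ → PiLp 1 (fun _ : Fin n → Bool => X) := fun ρ => ∑ η, dk ρ η • V η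
  have hG : ∀ ρ, HasDerivAt G (G' ρ) ρ := fun ρ =>
    HasDerivAt.fun_sum fun η _ => (hasDeriv_k ρ η).smul_const (V η)
  have hGa : ∀ ρ ε, G ρ ε = PP ρ f ε := by
    intro ρ ε; simp [G, V, PP]
  have hB : ∀ ρ, ρ < 1 → HasDerivAt (fun ρ => CC f * (- Real.log (1 - ρ)))
      (CC f * (1 - ρ)⁻¹) ρ := by
    intro ρ hρ
    have := ((((hasDerivAt_id ρ).const_sub 1).log (by simp; linarith)).neg).const_mul (CC f)
    refine HasDerivAt.congr_deriv this ?_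
    simp [neg_div]
  have key := image_norm_le_of_norm_deriv_right_le_deriv_boundary'
    (f := fun ρ => G ρ - G 0) (f' := G') (a := 0) (b := r)
    (B := fun ρ => CC f * (- Real.log (1 - ρ))) (B' := fun ρ => CC f * (1 - ρ)⁻¹)
    (fun x _ => ((hG x).sub_const (G 0)).continuousAt.continuousWithinAt)
    (fun x _ => ((hG x).sub_const (G 0)).hasDerivWithinAt)
    (by simp)
    (fun x hx => (hB x (by linarith [hx.2])).continuousAt.continuousWithinAt)
    (fun x hx => (hB x (by linarith [hx.2])).hasDerivWithinAt)
    (fun x hx => by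
      rw [PiLp.norm_eq_of_L1]
      refine le_trans (le_of_eq ?_) (deriv_bound x hx.1 (by linarith [hx.2]) f)
      simp [G', V])
    (Set.right_mem_Icc.2 h0)
  rw [PiLp.norm_eq_of_L1] at key
  simpa [hGa] using key

end PisierAux

open PisierAux

/-- The key inequality of Pisier's argument: for every Banach space `X`, every `n`, every
`f : {-1,1}ⁿ → X` and every `s > 0`,
`𝔼_ε ‖f(ε) - 𝔼_δ f(δ)‖ ≤ e^{ns} log(e^s/(e^s-1)) 𝔼_ε 𝔼_δ ‖∑ᵢ δᵢ ∂ᵢ f(ε)‖`. -/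
theorem pisier_heat_semigroup_bound {X : Type u} [NormedAddCommGroup X] [NormedSpace ℝ X]
    [CompleteSpace X] (n : ℕ) (f : (Fin n → Bool) → X) (s : ℝ) (hs : 0 < s) :
    ((2 : ℝ) ^ n)⁻¹ * ∑ ε : Fin n → Bool,
        ‖f ε - ((2 : ℝ) ^ n)⁻¹ • ∑ δ : Fin n → Bool, f δ‖ ≤
      Real.exp (n * s) * Real.log (Real.exp s / (Real.exp s - 1)) *
        (((2 : ℝ) ^ n)⁻¹ * ∑ ε : Fin n → Bool, ((2 : ℝ) ^ n)⁻¹ * ∑ δ : Fin n → Bool,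
          ‖∑ i : Fin n, rsign (δ i) • discDeriv f i ε‖) := by
  have hr0 : 0 < Real.exp (-s) := Real.exp_pos _
  have hr1 : Real.exp (-s) < 1 := by simpa using hs
  have hσ : 1 ≤ Real.exp s := by simpa using hs.le
  have h1 := main_bound (Real.exp (-s)) hr0.le hr1 f
  have h2 := PP_norm (Real.exp s) hσ (PP (Real.exp (-s)) f - PP 0 f)
  rw [sub_PP, PP_PP, PP_PP, ← Real.exp_add, add_neg_cancel, Real.exp_zero, mul_zero, PP_one] at h2
  simp only [Pi.sub_apply] at h2
  have hlog : Real.log (Real.exp s / (Real.exp s - 1)) = - Real.log (1 - Real.exp (-s)) := by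
    rw [← Real.log_inv, Real.exp_neg]
    congr 1
    have : Real.exp s - 1 ≠ 0 := by
      have : 1 < Real.exp s := by simpa using hs
      linarith
    have h3 := (Real.exp_pos s).ne'
    field_simp
  have h3 : ∑ ε, ‖f ε - PP 0 f ε‖ ≤ Real.exp s ^ n * (CC f * (- Real.log (1 - Real.exp (-s)))) :=
    h2.trans (mul_le_mul_of_nonneg_left h1 (by positivity))
  simp_rw [PP_zero] at h3
  rw [hlog, Real.exp_nat_mul]
  calc _ ≤ ((2 : ℝ) ^ n)⁻¹ * (Real.exp s ^ n * (CC f * (- Real.log (1 - Real.exp (-s))))) :=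
        mul_le_mul_of_nonneg_left h3 (by positivity)
    _ = _ := by
        unfold CC
        ring
end

section
/- There exists a universal constant c ∈ (0,∞) such that the following holds. Let (X,‖·‖_X) be a Banach space with Rademacher type p ∈ (1,2] with constant T. Then for every integer n ≥ 2 and every f : {−1,1}^n → X, E_ε[‖f(ε) − f(−ε)‖_X] ≤ c T (log n) (Σ_{i=1}^n E_ε[‖f(ε) − f(ε_1,…,ε_{i−1},−ε_i,ε_{i+1},…,ε_n)‖_X^p])^{1/p}, where E_ε denotes the average over a uniformly random ε ∈ {−1,1}^n. -/
open scoped BigOperators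

universe u

namespace MT

lemma prodsum {n : ℕ} (g : Fin n → Bool → ℝ) :
    ∑ ξ : Fin n → Bool, ∏ i, g i (ξ i) = ∏ i, (g i true + g i false) := by
  have := (Finset.prod_univ_sum (fun _ : Fin n => (Finset.univ : Finset Bool)) g).symm
  rw [Fintype.piFinset_univ] at this
  rw [this]
  simp

noncomputable def k (s : ℝ) (a b : Bool) : ℝ := (1 + s * (rsign a * rsign b)) / 2

noncomputable def K {n : ℕ} (s : ℝ) (e z : Fin n → Bool) : ℝ := ∏ i, k s (e i) (z i)

variable {X : Type u} [NormedAddCommGroup X] [NormedSpace ℝ X]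

noncomputable def P {n : ℕ} (s : ℝ) (f : (Fin n → Bool) → X) (e : Fin n → Bool) : X :=
  ∑ z, K s e z • f z

lemma K_comp {n : ℕ} (s t : ℝ) (e w : Fin n → Bool) :
    ∑ z, K s e z * K t z w = K (s * t) e w := by
  unfold K
  simp_rw [← Finset.prod_mul_distrib]
  rw [prodsum (fun i b => k s (e i) b * k t b (w i))]
  refine Finset.prod_congr rfl fun i _ => ?_
  cases e i <;> cases w i <;> simp [k, rsign] <;> ring

lemma P_comp {n : ℕ} (s t : ℝ) (f : (Fin n → Bool) → X) (e : Fin n → Bool) :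
    P s (P t f) e = P (s * t) f e := by
  unfold P
  simp_rw [Finset.smul_sum, smul_smul]
  rw [Finset.sum_comm]
  simp_rw [← Finset.sum_smul, K_comp]

lemma K_sum {n : ℕ} (s : ℝ) (e : Fin n → Bool) : ∑ z, K s e z = 1 := by
  unfold K
  rw [prodsum (fun i b => k s (e i) b)]
  refine Finset.prod_eq_one fun i _ => ?_
  cases e i <;> simp [k, rsign] <;> ring

lemma K_one {n : ℕ} (e z : Fin n → Bool) : K 1 e z = if e = z then 1 else 0 := by
  split_ifs with h
  · subst h
    refine Finset.prod_eq_one fun i _ => ?_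
    cases e i <;> norm_num [k, rsign]
  · obtain ⟨i, hi⟩ := Function.ne_iff.mp h
    refine Finset.prod_eq_zero (Finset.mem_univ i) ?_
    revert hi
    cases e i <;> cases z i <;> norm_num [k, rsign]

lemma P_one {n : ℕ} (f : (Fin n → Bool) → X) (e : Fin n → Bool) : P 1 f e = f e := by
  simp [P, K_one]

lemma K_abs {n : ℕ} (s : ℝ) (hs : 1 ≤ s) (z : Fin n → Bool) : ∑ e, |K s e z| = s ^ n := by
  unfold K
  simp_rw [Finset.abs_prod]
  rw [prodsum (fun i b => |k s b (z i)|)]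
  have : ∀ i ∈ Finset.univ, |k s true (z i)| + |k s false (z i)| = s := by
    intro i _
    have h1 : |(1 + s) / 2| = (1 + s) / 2 := abs_of_nonneg (by linarith)
    have h2 : |(1 + -s) / 2| = -((1 + -s) / 2) := abs_of_nonpos (by linarith)
    cases z i <;> simp only [k, rsign] <;> norm_num <;> simp only [h1, h2] <;> ring
  rw [Finset.prod_congr rfl this]
  simp

lemma P_norm {n : ℕ} (s : ℝ) (hs : 1 ≤ s) (f : (Fin n → Bool) → X) :
    ∑ e, ‖P s f e‖ ≤ s ^ n * ∑ e, ‖f e‖ := by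
  calc ∑ e, ‖P s f e‖ ≤ ∑ e, ∑ z, |K s e z| * ‖f z‖ := by
        refine Finset.sum_le_sum fun e _ => (norm_sum_le _ _).trans (le_of_eq ?_)
        simp [norm_smul]
    _ = s ^ n * ∑ e, ‖f e‖ := by
        rw [Finset.sum_comm, Finset.mul_sum]
        simp_rw [← Finset.sum_mul, K_abs s hs]

/-- flip -/
def fl {n : ℕ} (i : Fin n) (e : Fin n → Bool) : Fin n → Bool := Function.update e i (!e i)

lemma fl_fl {n : ℕ} (i : Fin n) (e : Fin n → Bool) : fl i (fl i e) = e := by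
  ext j
  by_cases h : j = i
  · subst h; simp [fl]
  · simp [fl, h]

noncomputable def et (r : ℝ) (a b : Bool) : ℝ := rsign a * rsign b / (1 + r * (rsign a * rsign b))

noncomputable def G {n : ℕ} (r : ℝ) (f : (Fin n → Bool) → X) (e : Fin n → Bool) : X :=
  ∑ z, ∑ i, ((rsign (e i) * rsign (z i) / 2) * ∏ j ∈ Finset.univ.erase i, k r (e j) (z j)) • f z

lemma P_deriv {n : ℕ} (r : ℝ) (f : (Fin n → Bool) → X) (e : Fin n → Bool) :
    HasDerivAt (fun r => P r f e) (G r f e) r := by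
  unfold P G
  refine HasDerivAt.fun_sum fun z _ => ?_
  rw [← Finset.sum_smul]
  refine HasDerivAt.smul_const ?_ _
  unfold K
  have := HasDerivAt.fun_finsetProd (u := Finset.univ) (f := fun i r => k r (e i) (z i))
    (f' := fun i => rsign (e i) * rsign (z i) / 2) (x := r) (fun i _ => by
      unfold k
      have := (((hasDerivAt_id r).mul_const (rsign (e i) * rsign (z i))).const_add 1).div_const 2
      simpa using this)
  convert this using 1
  refine Finset.sum_congr rfl fun i _ => ?_
  simp [mul_comm]

lemma k_et (r : ℝ) (h0 : 0 ≤ r) (h1 : r < 1) (a b : Bool) :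
    k r a b * et r a b = rsign a * rsign b / 2 := by
  unfold k et
  have : (1 + r * (rsign a * rsign b)) ≠ 0 := by
    cases a <;> cases b <;> simp [rsign] <;> linarith
  rw [div_mul_div_comm, mul_comm 2, mul_div_mul_left _ _ this]

lemma K_et {n : ℕ} (r : ℝ) (h0 : 0 ≤ r) (h1 : r < 1) (e z : Fin n → Bool) (i : Fin n) :
    ((rsign (e i) * rsign (z i) / 2) * ∏ j ∈ Finset.univ.erase i, k r (e j) (z j)) =
      K r e z * et r (e i) (z i) := by
  unfold K
  rw [← Finset.mul_prod_erase Finset.univ _ (Finset.mem_univ i), ← k_et r h0 h1]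
  ring

lemma G_eq1 {n : ℕ} (r : ℝ) (f : (Fin n → Bool) → X) (e : Fin n → Bool) :
    G r f e = ∑ z, ∑ i, ((rsign (e i) * rsign (z i) / 2) *
      ∏ j ∈ Finset.univ.erase i, k r (e j) (z j)) • ((1/2 : ℝ) • (f z - f (fl i z))) := by
  unfold G
  rw [Finset.sum_comm]
  conv_rhs => rw [Finset.sum_comm]
  refine Finset.sum_congr rfl fun i _ => ?_
  have key : ∑ z, ((rsign (e i) * rsign (z i) / 2) *
      ∏ j ∈ Finset.univ.erase i, k r (e j) (z j)) • f (fl i z) =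
      - ∑ z, ((rsign (e i) * rsign (z i) / 2) *
      ∏ j ∈ Finset.univ.erase i, k r (e j) (z j)) • f z := by
    rw [← Finset.sum_neg_distrib]
    refine Fintype.sum_equiv (Function.Involutive.toPerm (fl i) (fl_fl i)) _ _ fun z => ?_
    change _ = -((rsign (e i) * rsign (fl i z i) / 2 *
      ∏ j ∈ Finset.univ.erase i, k r (e j) (fl i z j)) • f (fl i z))
    rw [← neg_smul]
    congr 1
    have h1 : rsign (fl i z i) = - rsign (z i) := by
      simp only [fl, Function.update_self]; cases z i <;> simp [rsign]
    have h2 : ∏ j ∈ Finset.univ.erase i, k r (e j) (fl i z j) =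
        ∏ j ∈ Finset.univ.erase i, k r (e j) (z j) := by
      refine Finset.prod_congr rfl fun j hj => ?_
      rw [fl, Function.update_of_ne (Finset.ne_of_mem_erase hj)]
    rw [h1, h2]; ring
  simp_rw [smul_comm _ (1/2 : ℝ), smul_sub]
  rw [Finset.sum_sub_distrib]
  simp_rw [← Finset.smul_sum]
  rw [key, ← smul_sub, sub_neg_eq_add, ← two_smul ℝ, smul_smul]
  norm_num

lemma mom {n : ℕ} (u : Fin n → ℝ) (i : Fin n) :
    ∑ d : Fin n → Bool, (∏ j, (1 + rsign (d j) * u j) / 2) * rsign (d i) = u i := by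
  have : ∀ d : Fin n → Bool, (∏ j, (1 + rsign (d j) * u j) / 2) * rsign (d i) =
      ∏ j, ((1 + rsign (d j) * u j) / 2 * if j = i then rsign (d j) else 1) := by
    intro d
    rw [Finset.prod_mul_distrib]
    simp
  simp_rw [this]
  rw [prodsum (fun j b => ((1 + rsign b * u j) / 2 * if j = i then rsign b else 1))]
  rw [Finset.prod_eq_single i]
  · simp [rsign]; ring
  · intro j _ h; simp [rsign, h]; ring
  · simp

lemma G_eq2 {n : ℕ} (r : ℝ) (h0 : 0 ≤ r) (h1 : r < 1)
    (f : (Fin n → Bool) → X) (e : Fin n → Bool) :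
    G r f e = ∑ z, ∑ d : Fin n → Bool,
      (K r e z * ∏ j, (1 + rsign (d j) * ((1 - r) * et r (e j) (z j))) / 2) •
        ((1 - r)⁻¹ • ((1/2 : ℝ) • ∑ i, rsign (d i) • (f z - f (fl i z)))) := by
  rw [G_eq1]
  refine Finset.sum_congr rfl fun z _ => ?_
  simp_rw [K_et r h0 h1, Finset.smul_sum, smul_smul]
  rw [Finset.sum_comm]
  refine Finset.sum_congr rfl fun i _ => ?_
  rw [← Finset.sum_smul]
  congr 1
  have := mom (fun j => (1 - r) * et r (e j) (z j)) i
  have h : (1 - r) ≠ 0 := by linarith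
  have h2 : et r (e i) (z i) = (1 - r)⁻¹ * ((1 - r) * et r (e i) (z i)) := by field_simp
  rw [h2, ← this, Finset.mul_sum, Finset.mul_sum, Finset.sum_mul]
  refine Finset.sum_congr rfl fun d _ => ?_
  ring

lemma W_nonneg (r : ℝ) (h0 : 0 ≤ r) (h1 : r < 1) (a b d : Bool) :
    0 ≤ k r a b ∧ 0 ≤ (1 + rsign d * ((1 - r) * et r a b)) / 2 := by
  have h2 : 0 ≤ (1 - r) * (1 + r)⁻¹ := mul_nonneg (by linarith) (by positivity)
  have h3 : (1 - r) * (1 + r)⁻¹ ≤ 1 := by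
    rw [← div_eq_mul_inv, div_le_one (by linarith)]; linarith
  have h4 : (1 - r) * (1 + -r)⁻¹ = 1 := by
    rw [← sub_eq_add_neg]; exact mul_inv_cancel₀ (by linarith)
  constructor
  · cases a <;> cases b <;> simp [k, rsign] <;> linarith
  · cases a <;> cases b <;> cases d <;> simp [et, rsign, neg_div] <;> linarith

lemma W_sum {n : ℕ} (r : ℝ) (h0 : 0 ≤ r) (h1 : r < 1) (z d : Fin n → Bool) :
    ∑ e, (K r e z * ∏ j, (1 + rsign (d j) * ((1 - r) * et r (e j) (z j))) / 2) =
      ((2:ℝ) ^ n)⁻¹ := by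
  unfold K
  simp_rw [← Finset.prod_mul_distrib]
  rw [prodsum (fun j b => k r b (z j) * ((1 + rsign (d j) * ((1 - r) * et r b (z j))) / 2))]
  have : ∀ i ∈ Finset.univ, (k r true (z i) * ((1 + rsign (d i) * ((1 - r) * et r true (z i))) / 2)
     + k r false (z i) * ((1 + rsign (d i) * ((1 - r) * et r false (z i))) / 2)) = 2⁻¹ := by
    intro i _
    have e1 := k_et r h0 h1 true (z i)
    have e2 := k_et r h0 h1 false (z i)
    have e3 : k r true (z i) + k r false (z i) = 1 := by
      cases z i <;> simp [k, rsign] <;> ring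
    have e4 : rsign true * rsign (z i) / 2 + rsign false * rsign (z i) / 2 = 0 := by
      cases z i <;> simp [rsign] <;> ring
    linear_combination e3 / 2 + (rsign (d i) * (1 - r) / 2) * (e1 + e2 + e4)
  rw [Finset.prod_congr rfl this]
  simp

/-- The Rademacher quantity. -/
noncomputable def R {n : ℕ} (f : (Fin n → Bool) → X) : ℝ :=
  ∑ z, ((2:ℝ) ^ n)⁻¹ * ∑ d : Fin n → Bool, ‖∑ i, rsign (d i) • (f z - f (fl i z))‖

lemma G_norm {n : ℕ} (r : ℝ) (h0 : 0 ≤ r) (h1 : r < 1) (f : (Fin n → Bool) → X) :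
    ∑ e, ‖G r f e‖ ≤ (1 - r)⁻¹ * (R f / 2) := by
  have h1r : 0 < 1 - r := by linarith
  calc ∑ e, ‖G r f e‖ ≤ ∑ e, ∑ z, ∑ d : Fin n → Bool,
      (K r e z * ∏ j, (1 + rsign (d j) * ((1 - r) * et r (e j) (z j))) / 2) *
        ((1 - r)⁻¹ * ((1/2 : ℝ) * ‖∑ i, rsign (d i) • (f z - f (fl i z))‖)) := by
        refine Finset.sum_le_sum fun e _ => ?_
        rw [G_eq2 r h0 h1]
        refine (norm_sum_le _ _).trans (Finset.sum_le_sum fun z _ => ?_)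
        refine (norm_sum_le _ _).trans (Finset.sum_le_sum fun d _ => ?_)
        rw [norm_smul, norm_smul, norm_smul, Real.norm_of_nonneg, Real.norm_of_nonneg,
          Real.norm_of_nonneg]
        · norm_num
        · positivity
        · exact mul_nonneg (Finset.prod_nonneg fun j _ => (W_nonneg r h0 h1 _ _ true).1)
            (Finset.prod_nonneg fun j _ => (W_nonneg r h0 h1 _ _ _).2)
    _ = ∑ z, ∑ d : Fin n → Bool, ((2:ℝ) ^ n)⁻¹ *
        ((1 - r)⁻¹ * ((1/2 : ℝ) * ‖∑ i, rsign (d i) • (f z - f (fl i z))‖)) := by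
        rw [Finset.sum_comm]
        refine Finset.sum_congr rfl fun z _ => ?_
        rw [Finset.sum_comm]
        refine Finset.sum_congr rfl fun d _ => ?_
        rw [← Finset.sum_mul, W_sum r h0 h1]
    _ = (1 - r)⁻¹ * (R f / 2) := by
        unfold R
        simp_rw [Finset.mul_sum, Finset.sum_div, Finset.mul_sum]
        refine Finset.sum_congr rfl fun z _ => Finset.sum_congr rfl fun d _ => ?_
        ring

lemma G_cont {n : ℕ} (f : (Fin n → Bool) → X) (e : Fin n → Bool) :
    Continuous (fun r => G r f e) := by
  unfold G k
  fun_prop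

lemma P_diff [CompleteSpace X] {n : ℕ} (r : ℝ) (h0 : 0 ≤ r) (h1 : r < 1)
    (f : (Fin n → Bool) → X) :
    ∑ e, ‖P r f e - P 0 f e‖ ≤ -Real.log (1 - r) * (R f / 2) := by
  have hI : ∀ e, ‖P r f e - P 0 f e‖ ≤ ∫ t in (0:ℝ)..r, ‖G t f e‖ := by
    intro e
    rw [← intervalIntegral.integral_eq_sub_of_hasDerivAt (fun t _ => P_deriv t f e)
      ((G_cont f e).intervalIntegrable _ _)]
    exact intervalIntegral.norm_integral_le_integral_norm h0
  have hc : ContinuousOn (fun t : ℝ => (1 - t)⁻¹ * (R f / 2)) (Set.uIcc 0 r) := by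
    rw [Set.uIcc_of_le h0]
    refine ContinuousOn.mul (ContinuousOn.inv₀ (by fun_prop) ?_) continuousOn_const
    intro t ht
    have := ht.2
    have : 0 < 1 - t := by linarith
    exact this.ne'
  calc _ ≤ ∑ e, ∫ t in (0:ℝ)..r, ‖G t f e‖ := Finset.sum_le_sum fun e _ => hI e
    _ = ∫ t in (0:ℝ)..r, ∑ e, ‖G t f e‖ := by
        rw [intervalIntegral.integral_finsetSum]
        intro e _
        exact ((G_cont f e).norm).intervalIntegrable _ _
    _ ≤ ∫ t in (0:ℝ)..r, (1 - t)⁻¹ * (R f / 2) := by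
        refine intervalIntegral.integral_mono_on h0 ?_ hc.intervalIntegrable ?_
        · exact (continuous_finsetSum _ fun e _ => (G_cont f e).norm).intervalIntegrable _ _
        · intro t ht
          exact G_norm t ht.1 (by linarith [ht.2]) f
    _ = _ := by
        rw [intervalIntegral.integral_eq_sub_of_hasDerivAt
          (f := fun t => -Real.log (1 - t) * (R f / 2)) ?_ hc.intervalIntegrable]
        · simp
        · intro t ht
          rw [Set.uIcc_of_le h0] at ht
          have ht2 : 1 - t ≠ 0 := by linarith [ht.2]
          have := (((hasDerivAt_id t).const_sub 1).log ht2).neg.mul_const (R f / 2)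
          rw [neg_div, neg_neg, one_div] at this
          exact this

lemma P_zero {n : ℕ} (f : (Fin n → Bool) → X) (e : Fin n → Bool) :
    P 0 f e = P 0 f (fun _ => true) := by
  simp [P, K, k]

lemma pisier [CompleteSpace X] {n : ℕ} (hn : 2 ≤ n) (f : (Fin n → Bool) → X) :
    ∑ e, ‖f e - f (fun i => !e i)‖ ≤ Real.exp 2 * (Real.log n * R f) := by
  have hn' : (2:ℝ) ≤ n := by exact_mod_cast hn
  have hn0 : (0:ℝ) < n := by linarith
  have hn1 : (0:ℝ) < n - 1 := by linarith
  set r : ℝ := 1 - (n:ℝ)⁻¹ with hr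
  have hinv : (n:ℝ)⁻¹ ≤ 1/2 := by
    rw [inv_le_comm₀ hn0 (by norm_num)]; norm_num; exact hn
  have hinv0 : 0 < (n:ℝ)⁻¹ := by positivity
  have h0 : 0 < r := by linarith
  have h1 : r < 1 := by linarith
  have hR : 0 ≤ R f := by unfold R; positivity
  have hlog : 0 ≤ Real.log n := Real.log_nonneg (by linarith)
  have hd := P_diff r h0.le h1 f
  have hl : -Real.log (1 - r) = Real.log n := by
    rw [hr, sub_sub_cancel, Real.log_inv, neg_neg]
  rw [hl] at hd
  set c := P 0 f (fun _ => true) with hcdef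
  have hP : ∀ e, P r⁻¹ (fun e => P r f e - P 0 f e) e = f e - c := by
    intro e
    have a : P r⁻¹ (P r f) e = f e := by
      rw [P_comp, inv_mul_cancel₀ h0.ne', P_one]
    have b : P r⁻¹ (P 0 f) e = c := by
      rw [P_comp, mul_zero, P_zero]
    rw [← a, ← b]
    simp [P, smul_sub]
  have hs : 1 ≤ r⁻¹ := (one_le_inv₀ h0).2 h1.le
  have hN := P_norm r⁻¹ hs (fun e => P r f e - P 0 f e)
  simp_rw [hP] at hN
  have hpow : r⁻¹ ^ n ≤ Real.exp 2 := by
    have e1 : r⁻¹ = 1 + 1 / ((n:ℝ) - 1) := by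
      rw [hr]; field_simp; ring
    have e2 : r⁻¹ ≤ Real.exp (1 / ((n:ℝ) - 1)) := by
      rw [e1, add_comm]; exact Real.add_one_le_exp _
    calc r⁻¹ ^ n ≤ Real.exp (1 / ((n:ℝ) - 1)) ^ n := by gcongr
      _ = Real.exp (n * (1 / ((n:ℝ) - 1))) := by rw [← Real.exp_nat_mul]
      _ ≤ Real.exp 2 := by
        apply Real.exp_le_exp.2
        rw [mul_one_div, div_le_iff₀ hn1]; linarith
  have hfc : ∑ e, ‖f e - c‖ ≤ Real.exp 2 * (Real.log n * (R f / 2)) :=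
    hN.trans (mul_le_mul hpow hd (Finset.sum_nonneg fun _ _ => norm_nonneg _) (Real.exp_pos _).le)
  have hneg : ∑ e : Fin n → Bool, ‖f (fun i => !e i) - c‖ = ∑ e, ‖f e - c‖ := by
    refine Fintype.sum_equiv (Function.Involutive.toPerm
      (fun (e : Fin n → Bool) => fun i => !e i) ?_) _ _ fun z => rfl
    intro e; simp
  calc ∑ e, ‖f e - f (fun i => !e i)‖
      ≤ ∑ e : Fin n → Bool, (‖f e - c‖ + ‖f (fun i => !e i) - c‖) := by
        refine Finset.sum_le_sum fun e _ => ?_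
        rw [← sub_sub_sub_cancel_right _ _ c]
        exact norm_sub_le _ _
    _ = 2 * ∑ e, ‖f e - c‖ := by rw [Finset.sum_add_distrib, hneg]; ring
    _ ≤ _ := by linarith

end MT

theorem metric_type_up_to_log :
    ∃ c : ℝ, 0 < c ∧
      ∀ (X : Type u) [NormedAddCommGroup X] [NormedSpace ℝ X] [CompleteSpace X],
        ∀ p T : ℝ, 1 < p → p ≤ 2 →
          (∀ (n : ℕ) (x : Fin n → X),
            ((2 : ℝ) ^ n)⁻¹ * ∑ ε : Fin n → Bool, ‖∑ i : Fin n, rsign (ε i) • x i‖ ≤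
              T * (∑ i : Fin n, ‖x i‖ ^ p) ^ (1 / p)) →
          ∀ n : ℕ, 2 ≤ n → ∀ f : (Fin n → Bool) → X,
            ((2 : ℝ) ^ n)⁻¹ * ∑ ε : Fin n → Bool, ‖f ε - f (fun i => !ε i)‖ ≤
              c * T * Real.log (n : ℝ) *
                (∑ i : Fin n, ((2 : ℝ) ^ n)⁻¹ * ∑ ε : Fin n → Bool,
                  ‖f ε - f (Function.update ε i (!ε i))‖ ^ p) ^ (1 / p) := by
  refine ⟨Real.exp 2, Real.exp_pos _, ?_⟩
  intro X _ _ _ p T hp hp2 hT n hn f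
  have hp0 : 0 < p := by linarith
  have hlog : 0 ≤ Real.log n := Real.log_nonneg (by exact_mod_cast (by omega : 1 ≤ n))
  by_cases hT0 : T < 0
  · have hz : ∀ x : X, x = 0 := by
      intro x
      have h := hT 1 (fun _ => x)
      have h2 : T * (∑ i : Fin 1, ‖x‖ ^ p) ^ (1 / p) = T * ‖x‖ := by
        simp [← Real.rpow_mul (norm_nonneg x), hp0.ne']
      rw [h2] at h
      have h3 : 0 ≤ T * ‖x‖ := le_trans (by positivity) h
      by_contra hx
      have := norm_pos_iff.2 hx
      nlinarith
    have hz' : ∀ x : X, ‖x‖ = 0 := fun x => by rw [hz x, norm_zero]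
    simp [hz', hp0.ne']
  push Not at hT0
  have h1 := MT.pisier hn f
  set S : (Fin n → Bool) → ℝ := fun z => ∑ i, ‖f z - f (MT.fl i z)‖ ^ p with hS
  have hS0 : ∀ z, 0 ≤ S z := fun z => Finset.sum_nonneg fun i _ => by positivity
  have h2 : MT.R f ≤ ∑ z, T * S z ^ (1 / p) :=
    Finset.sum_le_sum fun z _ => hT n fun i => f z - f (MT.fl i z)
  have h3 := Real.arith_mean_le_rpow_mean (Finset.univ : Finset (Fin n → Bool))
    (fun _ => ((2:ℝ) ^ n)⁻¹) (fun z => S z ^ (1 / p)) (fun _ _ => by positivity)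
    (by simp) (fun z _ => Real.rpow_nonneg (hS0 z) _) hp.le
  have h4 : ∀ z, (S z ^ (1 / p)) ^ p = S z := fun z => by
    rw [← Real.rpow_mul (hS0 z), one_div_mul_cancel hp0.ne', Real.rpow_one]
  simp_rw [h4] at h3
  have h5 : ∑ z, ((2:ℝ) ^ n)⁻¹ * S z = ∑ i : Fin n, ((2 : ℝ) ^ n)⁻¹ * ∑ ε : Fin n → Bool,
                  ‖f ε - f (Function.update ε i (!ε i))‖ ^ p := by
    simp_rw [hS, Finset.mul_sum]
    rw [Finset.sum_comm]
    rfl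
  rw [h5] at h3
  rw [← Finset.mul_sum] at h2 h3
  calc _ ≤ ((2 : ℝ) ^ n)⁻¹ * (Real.exp 2 * (Real.log n * (T * ∑ z, S z ^ (1 / p)))) := by
        gcongr
        exact h1.trans (by gcongr)
    _ = (Real.exp 2 * T * Real.log n) * (((2 : ℝ) ^ n)⁻¹ * ∑ z, S z ^ (1 / p)) := by ring
    _ ≤ _ := by gcongr
end

section
/- Let (X,‖·‖_X) be a Banach space and q ∈ [2,∞). Then X has Rademacher cotype q if and only if X has metric cotype q. -/
open scoped BigOperators

/-- A Banach space `X` has Rademacher cotype `q` if there is `C > 0` such that for every `n` and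
every `x₁,…,xₙ ∈ X`, `(∑ᵢ ‖xᵢ‖^q)^{1/q} ≤ C 𝔼_ε ‖∑ᵢ εᵢ xᵢ‖`. -/
def RademacherCotype (X : Type*) [NormedAddCommGroup X] [NormedSpace ℝ X] (q : ℝ) : Prop :=
  ∃ C : ℝ, 0 < C ∧ ∀ (n : ℕ) (x : Fin n → X),
    (∑ i : Fin n, ‖x i‖ ^ q) ^ (1 / q) ≤
      C * (((2 : ℝ) ^ n)⁻¹ *
        ∑ ε : Fin n → Bool, ‖∑ i : Fin n, (if ε i then (1 : ℝ) else -1) • x i‖)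

/-- A Banach space `X` has metric cotype `q` if there is `C > 0` such that for every `n ≥ 1`
there exists an even integer `m` such that every `f : ℤ_mⁿ → X` satisfies
`∑ⱼ ∑_x ‖f(x + (m/2)eⱼ) - f(x)‖^q ≤ (Cm)^q 3^{-n} ∑_{ε ∈ {-1,0,1}ⁿ} ∑_x ‖f(x+ε) - f(x)‖^q`. -/
def MetricCotype (X : Type*) [NormedAddCommGroup X] (q : ℝ) : Prop :=
  ∃ C : ℝ, 0 < C ∧ ∀ n : ℕ, 0 < n → ∃ m : ℕ, ∃ hm : m ≠ 0, Even m ∧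
    haveI : NeZero m := ⟨hm⟩
    ∀ f : (Fin n → ZMod m) → X,
      (∑ j : Fin n, ∑ x : Fin n → ZMod m,
          ‖f (x + fun i => if i = j then ((m / 2 : ℕ) : ZMod m) else 0) - f x‖ ^ q) ≤
        (C * m) ^ q / 3 ^ n *
          ∑ ε : Fin n → ({-1, 0, 1} : Finset ℤ), ∑ x : Fin n → ZMod m,
            ‖f (x + fun i => ((ε i : ℤ) : ZMod m)) - f x‖ ^ q


def mcSgn (b : Bool) : ℝ := if b then 1 else -1

theorem mc_sum_cons {α : Type*} [Fintype α] (n : ℕ) (F : (Fin (n+1) → α) → ℝ) :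
    ∑ δ : Fin (n+1) → α, F δ = ∑ a : α, ∑ δ : Fin n → α, F (Fin.cons a δ) := by
  rw [← Fintype.sum_prod_type']
  exact (Fintype.sum_equiv (Fin.consEquiv (fun _ : Fin (n+1) => α)) _ _ (fun _ => rfl)).symm

section
variable {X : Type*} [NormedAddCommGroup X] [NormedSpace ℝ X]

def mcR (N : X → ℝ) (n : ℕ) (x : Fin n → X) (x0 : X) : ℝ :=
  ∑ δ : Fin n → Bool, N (x0 + ∑ i, mcSgn (δ i) • x i)

def mcQ (N : X → ℝ) (n : ℕ) (x : Fin n → X) (x0 : X) : ℝ :=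
  ∑ ε : Fin n → ({-1, 0, 1} : Finset ℤ), N (x0 + ∑ i, ((ε i : ℤ) : ℝ) • x i)

theorem mcR_succ (N : X → ℝ) (n : ℕ) (x : Fin (n+1) → X) (x0 : X) :
    mcR N (n+1) x x0 = mcR N n (fun i => x i.succ) (x0 + x 0)
      + mcR N n (fun i => x i.succ) (x0 - x 0) := by
  unfold mcR
  rw [mc_sum_cons]
  simp [Fin.sum_univ_succ, mcSgn, add_assoc, sub_eq_add_neg]

theorem mc_sum3 (F : ℤ → ℝ) :
    ∑ a : ({-1, 0, 1} : Finset ℤ), F a = F 1 + F 0 + F (-1) := by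
  rw [Finset.sum_coe_sort ({-1, 0, 1} : Finset ℤ) F]
  rw [Finset.sum_insert (by decide), Finset.sum_insert (by decide), Finset.sum_singleton]
  ring

theorem mcQ_succ (N : X → ℝ) (n : ℕ) (x : Fin (n+1) → X) (x0 : X) :
    mcQ N (n+1) x x0 = mcQ N n (fun i => x i.succ) (x0 + x 0)
      + mcQ N n (fun i => x i.succ) x0
      + mcQ N n (fun i => x i.succ) (x0 - x 0) := by
  unfold mcQ
  rw [mc_sum_cons]
  simp only [Fin.sum_univ_succ, Fin.cons_zero, Fin.cons_succ]
  have := mc_sum3 (fun a => ∑ ε : Fin n → ({-1, 0, 1} : Finset ℤ),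
    N (x0 + ((a : ℝ) • x 0 + ∑ i, ((ε i : ℤ) : ℝ) • x i.succ)))
  rw [this]
  simp [add_assoc, sub_eq_add_neg]

theorem mcR_convex {N : X → ℝ} (hN : ConvexOn ℝ Set.univ N) (n : ℕ) (x : Fin n → X) :
    ConvexOn ℝ Set.univ (mcR N n x) := by
  refine ⟨convex_univ, fun u _ v _ a b ha hb hab => ?_⟩
  unfold mcR
  simp only [smul_eq_mul]
  rw [Finset.mul_sum, Finset.mul_sum, ← Finset.sum_add_distrib]
  refine Finset.sum_le_sum fun δ _ => ?_
  have := hN.2 (Set.mem_univ (u + ∑ i, mcSgn (δ i) • x i))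
    (Set.mem_univ (v + ∑ i, mcSgn (δ i) • x i)) ha hb hab
  refine le_trans (le_of_eq ?_) this
  congr 1
  obtain rfl : b = 1 - a := by linarith
  module

theorem mc_convex_pair {h : X → ℝ} (hN : ConvexOn ℝ Set.univ h) (x y : X) (a : ℝ) (ha : |a| ≤ 1) :
    h (x + a • y) + h (x - a • y) ≤ h (x + y) + h (x - y) := by
  obtain ⟨h1, h2⟩ := abs_le.1 ha
  have e1 := hN.2 (Set.mem_univ (x + y)) (Set.mem_univ (x - y))
    (show 0 ≤ (1 + a)/2 by linarith) (show 0 ≤ (1 - a)/2 by linarith) (by ring)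
  have e2 := hN.2 (Set.mem_univ (x + y)) (Set.mem_univ (x - y))
    (show 0 ≤ (1 - a)/2 by linarith) (show 0 ≤ (1 + a)/2 by linarith) (by ring)
  have f1 : ((1 + a)/2) • (x + y) + ((1 - a)/2) • (x - y) = x + a • y := by module
  have f2 : ((1 - a)/2) • (x + y) + ((1 + a)/2) • (x - y) = x - a • y := by module
  rw [f1] at e1; rw [f2] at e2
  simp only [smul_eq_mul] at e1 e2
  linarith

theorem mc_contraction {N : X → ℝ} (hN : ConvexOn ℝ Set.univ N) (n : ℕ) :
    ∀ (x : Fin n → X) (a : Fin n → ℝ) (_ : ∀ i, |a i| ≤ 1) (x0 : X),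
      mcR N n (fun i => a i • x i) x0 ≤ mcR N n x x0 := by
  induction n with
  | zero => intro x a _ x0; simp [mcR]
  | succ n ih =>
    intro x a ha x0
    rw [mcR_succ, mcR_succ]
    have i1 := ih (fun i => x i.succ) (fun i => a i.succ) (fun i => ha _)
    have := mc_convex_pair (mcR_convex hN n (fun i => x i.succ)) x0 (x 0) (a 0) (ha 0)
    linarith [i1 (x0 + a 0 • x 0), i1 (x0 - a 0 • x 0)]

theorem mc_three {N : X → ℝ} (hN : ConvexOn ℝ Set.univ N) (n : ℕ) :
    ∀ (x : Fin n → X) (x0 : X),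
      ((2:ℝ)^n)⁻¹ * mcR N n x x0 ≤ ((3:ℝ)^n)⁻¹ * mcQ N n (fun i => (3/2 : ℝ) • x i) x0 := by
  induction n with
  | zero => intro x x0; simp [mcR, mcQ]
  | succ n ih =>
    intro x x0
    rw [mcR_succ, mcQ_succ]
    have i1 := ih (fun i => x i.succ)
    have hc := mcR_convex hN n (fun i => x i.succ)
    have e1 := hc.2 (Set.mem_univ (x0 + (3/2:ℝ) • x 0)) (Set.mem_univ x0)
      (show (0:ℝ) ≤ 2/3 by norm_num) (show (0:ℝ) ≤ 1/3 by norm_num) (by norm_num)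
    have e2 := hc.2 (Set.mem_univ (x0 - (3/2:ℝ) • x 0)) (Set.mem_univ x0)
      (show (0:ℝ) ≤ 2/3 by norm_num) (show (0:ℝ) ≤ 1/3 by norm_num) (by norm_num)
    have f1 : (2/3:ℝ) • (x0 + (3/2:ℝ) • x 0) + (1/3:ℝ) • x0 = x0 + x 0 := by module
    have f2 : (2/3:ℝ) • (x0 - (3/2:ℝ) • x 0) + (1/3:ℝ) • x0 = x0 - x 0 := by module
    rw [f1] at e1; rw [f2] at e2
    simp only [smul_eq_mul] at e1 e2
    have j1 := i1 (x0 + (3/2:ℝ) • x 0)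
    have j2 := i1 (x0 - (3/2:ℝ) • x 0)
    have j3 := i1 x0
    have hp : (0:ℝ) < ((2:ℝ)^n)⁻¹ := by positivity
    rw [pow_succ, pow_succ, mul_inv, mul_inv]
    have := mul_le_mul_of_nonneg_left (add_le_add e1 e2) hp.le
    linarith

theorem mc_scalar_aux (N : ℕ) (u : ℝ) (hu : |u| ≤ 1) : (1 + u)^N ≤ 1 + N * u + 4^N * u^2 := by
  obtain ⟨h1, h2⟩ := abs_le.1 hu
  induction N with
  | zero => simp; positivity
  | succ N ih =>
    have hN : (N:ℝ) ≤ 4^N := by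
      exact_mod_cast (Nat.lt_pow_self (by norm_num : 1 < 4)).le
    have h4 : (0:ℝ) < 4^N := by positivity
    rw [pow_succ, pow_succ]
    have := mul_le_mul_of_nonneg_right ih (show 0 ≤ 1 + u by linarith)
    have h5 : (4:ℝ)^N * u^2 * u ≤ 4^N*u^2 * 1 := mul_le_mul_of_nonneg_left h2 (by positivity)
    have h6 : (N:ℝ) * u^2 ≤ 4^N * u^2 := mul_le_mul_of_nonneg_right hN (by positivity)
    push_cast
    nlinarith

/-- scalar two-point inequality -/
theorem mc_scalar (k : ℕ) (ρ : ℝ) (hρ : 0 < ρ) (hρ1 : ρ ≤ 1) (hk : 16^k * ρ^2 ≤ k) (a b : ℝ)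
    (hab : |b| ≤ a) :
    ((a + ρ * b)^(2*k) + (a - ρ * b)^(2*k)) / 2 ≤ (a^2 + b^2)^k := by
  rcases (le_trans (abs_nonneg b) hab).eq_or_lt with h0 | h0
  · subst h0
    have : b = 0 := by simpa using hab
    subst this
    rcases Nat.eq_zero_or_pos k with rfl | hk <;> simp
    rw [pow_mul]; simp
  · obtain ⟨t, rfl⟩ : ∃ t, b = a * t := ⟨b / a, by field_simp⟩
    have ht : |t| ≤ 1 := by
      rw [abs_mul, abs_of_pos h0] at hab
      by_contra! h; nlinarith
    have hu : |ρ * t| ≤ 1 := by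
      rw [abs_mul, abs_of_pos hρ]; nlinarith [abs_nonneg t]
    have e1 := mc_scalar_aux (2*k) (ρ * t) hu
    have e2 := mc_scalar_aux (2*k) (-(ρ * t)) (by rwa [abs_neg])
    have e3 := one_add_mul_le_pow (a := t^2) (by nlinarith [sq_nonneg t]) k
    have e4 : ((1 + ρ * t)^(2*k) + (1 + -(ρ * t))^(2*k)) / 2 ≤ (1 + t^2)^k := by
      rw [pow_mul] at e1 e2
      rw [pow_mul (4:ℝ)] at e1 e2
      norm_num at e1 e2
      have : 16^k * ρ^2 * t^2 ≤ k * t^2 := mul_le_mul_of_nonneg_right hk (by positivity)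
      rw [pow_mul, pow_mul]
      nlinarith
    have e5 := mul_le_mul_of_nonneg_left e4 (show 0 ≤ a^(2*k) by positivity)
    calc _ = a^(2*k) * (((1 + ρ * t)^(2*k) + (1 + -(ρ * t))^(2*k)) / 2) := by
            rw [show a + ρ * (a * t) = a * (1 + ρ * t) by ring,
              show a - ρ * (a * t) = a * (1 + -(ρ * t)) by ring, mul_pow, mul_pow]; ring
      _ ≤ _ := e5
      _ = _ := by rw [pow_mul, ← mul_pow]; ring

theorem mc_twopoint (k : ℕ) (ρ : ℝ) (hρ : 0 < ρ) (hρ1 : ρ ≤ 1) (hk : 16^k * ρ^2 ≤ k) (x y : X) :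
    (‖x + ρ • y‖^(2*k) + ‖x - ρ • y‖^(2*k)) / 2 ≤ ((‖x + y‖^2 + ‖x - y‖^2)/2)^k := by
  set p := ‖x + y‖ with hp
  set r := ‖x - y‖ with hr
  have hp0 : 0 ≤ p := norm_nonneg _
  have hr0 : 0 ≤ r := norm_nonneg _
  have h1 : ‖x + ρ • y‖ ≤ (p + r)/2 + ρ * ((p - r)/2) := by
    rw [show x + ρ • y = ((1+ρ)/2) • (x + y) + ((1-ρ)/2) • (x - y) by module]
    refine (norm_add_le _ _).trans ?_
    rw [norm_smul_of_nonneg (by linarith), norm_smul_of_nonneg (by linarith), ← hp, ← hr]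
    linarith
  have h2 : ‖x - ρ • y‖ ≤ (p + r)/2 - ρ * ((p - r)/2) := by
    rw [show x - ρ • y = ((1-ρ)/2) • (x + y) + ((1+ρ)/2) • (x - y) by module]
    refine (norm_add_le _ _).trans ?_
    rw [norm_smul_of_nonneg (by linarith), norm_smul_of_nonneg (by linarith), ← hp, ← hr]
    linarith
  have := mc_scalar k ρ hρ hρ1 hk ((p+r)/2) ((p-r)/2) (abs_le.2 ⟨by linarith, by linarith⟩)
  have g1 := pow_le_pow_left₀ (norm_nonneg _) h1 (2*k)
  have g2 := pow_le_pow_left₀ (norm_nonneg _) h2 (2*k)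
  rw [show ((p+r)/2)^2 + ((p-r)/2)^2 = (p^2 + r^2)/2 by ring] at this
  linarith

theorem mc_mink {ι : Type*} (s : Finset ι) (k : ℕ) (hk : 0 < k) (a b : ι → ℝ) (ha : ∀ i, 0 ≤ a i)
    (hb : ∀ i, 0 ≤ b i) (c α β : ℝ) (hc : 0 ≤ c) (hα : 0 ≤ α) (hβ : 0 ≤ β)
    (h1 : ∑ i ∈ s, a i ^ k ≤ c * α^k) (h2 : ∑ i ∈ s, b i ^ k ≤ c * β^k) :
    ∑ i ∈ s, (a i + b i)^k ≤ c * (α + β)^k := by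
  have hk1 : (1:ℝ) ≤ k := by exact_mod_cast hk
  have hk0 : (k:ℝ) ≠ 0 := by positivity
  have := Real.Lp_add_le_of_nonneg s (f := a) (g := b) hk1 (fun i _ => ha i) (fun i _ => hb i)
  simp only [Real.rpow_natCast] at this
  have key : ∀ γ : ℝ, 0 ≤ γ → (c * γ^k)^(1/(k:ℝ)) = c^(1/(k:ℝ)) * γ := by
    intro γ hγ
    rw [Real.mul_rpow hc (by positivity), one_div, Real.pow_rpow_inv_natCast hγ hk.ne']
  have hs : ∀ f : ι → ℝ, (∀ i, 0 ≤ f i) → 0 ≤ ∑ i ∈ s, f i ^ k :=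
    fun f hf => Finset.sum_nonneg fun i _ => pow_nonneg (hf i) _
  have g1 := Real.rpow_le_rpow (hs a ha) h1 (show 0 ≤ 1/(k:ℝ) by positivity)
  have g2 := Real.rpow_le_rpow (hs b hb) h2 (show 0 ≤ 1/(k:ℝ) by positivity)
  rw [key _ hα] at g1
  rw [key _ hβ] at g2
  have g3 : (∑ i ∈ s, (a i + b i)^k)^(1/(k:ℝ)) ≤ (c * (α+β)^k)^(1/(k:ℝ)) := by
    rw [key _ (by positivity)]; linarith
  exact (Real.rpow_le_rpow_iff (hs _ (fun i => add_nonneg (ha i) (hb i))) (by positivity)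
    (by positivity)).1 g3

theorem mc_hyper (k : ℕ) (hk0 : 0 < k) (ρ : ℝ) (hρ : 0 < ρ) (hρ1 : ρ ≤ 1) (hk : 16^k * ρ^2 ≤ k) (n : ℕ) :
    ∀ (x : Fin n → X) (x0 : X),
      mcR (fun y : X => ‖y‖^(2*k)) n (fun i => ρ • x i) x0 ≤
        2^n * (((2:ℝ)^n)⁻¹ * mcR (fun y : X => ‖y‖^2) n x x0)^k := by
  induction n with
  | zero => intro x x0; simp [mcR, pow_mul]
  | succ n ih =>
    intro x x0
    have i1 := ih (fun i => x i.succ)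
    have hnn : ∀ y, 0 ≤ ((2:ℝ)^n)⁻¹ * mcR (fun y : X => ‖y‖^2) n (fun i => x i.succ) y := by
      intro y
      refine mul_nonneg (by positivity) (Finset.sum_nonneg fun i _ => by positivity)
    have m := mc_mink (Finset.univ : Finset (Fin n → Bool)) k hk0
      (fun δ => ‖(x0 + x 0) + ∑ i, mcSgn (δ i) • ρ • x i.succ‖^2)
      (fun δ => ‖(x0 - x 0) + ∑ i, mcSgn (δ i) • ρ • x i.succ‖^2)
      (fun _ => by positivity) (fun _ => by positivity) (2^n)
      (((2:ℝ)^n)⁻¹ * mcR (fun y : X => ‖y‖^2) n (fun i => x i.succ) (x0 + x 0))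
      (((2:ℝ)^n)⁻¹ * mcR (fun y : X => ‖y‖^2) n (fun i => x i.succ) (x0 - x 0))
      (by positivity) (hnn _) (hnn _)
      (by simpa only [mcR, pow_mul] using i1 (x0 + x 0))
      (by simpa only [mcR, pow_mul] using i1 (x0 - x 0))
    rw [mcR_succ, mcR_succ]
    have step : mcR (fun y : X => ‖y‖^(2*k)) n (fun i => ρ • x i.succ) (x0 + ρ • x 0)
        + mcR (fun y : X => ‖y‖^(2*k)) n (fun i => ρ • x i.succ) (x0 - ρ • x 0)
        ≤ 2 * (2⁻¹)^k * ∑ δ : Fin n → Bool, (‖(x0 + x 0) + ∑ i, mcSgn (δ i) • ρ • x i.succ‖^2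
          + ‖(x0 - x 0) + ∑ i, mcSgn (δ i) • ρ • x i.succ‖^2)^k := by
      unfold mcR
      rw [← Finset.sum_add_distrib, Finset.mul_sum]
      refine Finset.sum_le_sum fun δ _ => ?_
      have t := mc_twopoint k ρ hρ hρ1 hk (x0 + ∑ i, mcSgn (δ i) • ρ • x i.succ) (x 0)
      rw [add_right_comm x0 _ (ρ • x 0), add_right_comm x0 _ (x 0),
        add_sub_right_comm x0 _ (ρ • x 0), add_sub_right_comm x0 _ (x 0), div_eq_mul_inv (_ + _ : ℝ) 2,
        div_eq_mul_inv (_ + _ : ℝ) 2, mul_pow] at t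
      linarith
    refine step.trans ((mul_le_mul_of_nonneg_left m (by positivity)).trans (le_of_eq ?_))
    rw [pow_succ, mul_inv, ← mul_add]
    simp only [mul_pow]
    ring

end

section
variable {X : Type*} [NormedAddCommGroup X] [NormedSpace ℝ X]

/-- Real-exponent power mean inequality for uniform averages. -/
theorem mc_jensen {ι : Type*} [Fintype ι] (c : ℝ) (hc : c * Fintype.card ι = 1) (hc0 : 0 ≤ c) (f : ι → ℝ) (hf : ∀ i, 0 ≤ f i)
    (p : ℝ) (hp : 1 ≤ p) : (c * ∑ i, f i)^p ≤ c * ∑ i, f i ^ p := by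
  have := Real.rpow_arith_mean_le_arith_mean_rpow (Finset.univ : Finset ι) (fun _ => c) f
    (fun _ _ => hc0) (by simp; linarith) (fun i _ => hf i) hp
  simpa only [← Finset.mul_sum] using this

theorem mc_kahane_even (k : ℕ) (hk0 : 0 < k) : ∃ K : ℝ, 0 < K ∧ ∀ (n : ℕ) (x : Fin n → X),
    ((2:ℝ)^n)⁻¹ * mcR (fun y : X => ‖y‖^(2*k)) n x 0 ≤
      K * (((2:ℝ)^n)⁻¹ * mcR (fun y : X => ‖y‖^2) n x 0)^k := by
  set ρ : ℝ := (4^k)⁻¹ with hρ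
  have hρ0 : 0 < ρ := by positivity
  have hρ1 : ρ ≤ 1 := inv_le_one_of_one_le₀ (one_le_pow₀ (by norm_num))
  have hk : 16^k * ρ^2 ≤ k := by
    have : (16:ℝ)^k * ρ^2 = 1 := by
      rw [hρ, show (16:ℝ) = 4^2 by norm_num, ← pow_mul, mul_comm 2 k, pow_mul, ← mul_pow,
        mul_inv_cancel₀ (by positivity), one_pow]
    rw [this]; exact_mod_cast hk0
  refine ⟨(ρ^(2*k))⁻¹, by positivity, fun n x => ?_⟩
  have h := mc_hyper k hk0 ρ hρ0 hρ1 hk n x 0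
  have e : mcR (fun y : X => ‖y‖^(2*k)) n (fun i => ρ • x i) 0
      = ρ^(2*k) * mcR (fun y : X => ‖y‖^(2*k)) n x 0 := by
    unfold mcR
    rw [Finset.mul_sum]
    refine Finset.sum_congr rfl fun δ _ => ?_
    simp only [zero_add, smul_comm _ ρ, ← Finset.smul_sum, norm_smul_of_nonneg hρ0.le, mul_pow]
  rw [e] at h
  rw [inv_mul_le_iff₀ (by positivity)]
  have hp : 0 < ρ^(2*k) := by positivity
  rw [show ∀ a b c : ℝ, a * (b⁻¹ * c) = (a * c) / b from fun a b c => by ring,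
    le_div_iff₀' hp]
  exact h

theorem mc_cs {ι : Type*} [Fintype ι] (c : ℝ) (f g : ι → ℝ) :
    (c * ∑ i, f i * g i)^2 ≤ (c * ∑ i, f i ^ 2) * (c * ∑ i, g i ^ 2) := by
  have := Finset.sum_mul_sq_le_sq_mul_sq Finset.univ f g
  nlinarith [sq_nonneg c, mul_le_mul_of_nonneg_left this (sq_nonneg c)]

theorem mc_kahane_two : ∃ K : ℝ, 0 < K ∧ ∀ (n : ℕ) (x : Fin n → X),
    ((2:ℝ)^n)⁻¹ * mcR (fun y : X => ‖y‖^2) n x 0 ≤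
      K * (((2:ℝ)^n)⁻¹ * mcR (fun y : X => ‖y‖) n x 0)^2 := by
  obtain ⟨K, hK, h⟩ := mc_kahane_even (X := X) 2 (by norm_num)
  refine ⟨K, hK, fun n x => ?_⟩
  have h4 := h n x
  unfold mcR at *
  set c : ℝ := ((2:ℝ)^n)⁻¹
  have hc : 0 ≤ c := by positivity
  set f : (Fin n → Bool) → ℝ := fun δ => ‖0 + ∑ i, mcSgn (δ i) • x i‖ with hf
  have hf0 : ∀ δ, 0 ≤ f δ := fun δ => norm_nonneg _
  change c * ∑ δ, f δ ^ 4 ≤ K * (c * ∑ δ, f δ ^ 2)^2 at h4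
  change c * ∑ δ, f δ ^ 2 ≤ K * (c * ∑ δ, f δ)^2
  have c1 := mc_cs c (fun δ => √(f δ)) (fun δ => √(f δ) * f δ)
  have c2 := mc_cs c f (fun δ => f δ ^ 2)
  have r1 : ∀ δ, √(f δ) * (√(f δ) * f δ) = f δ ^ 2 := fun δ => by
    rw [← mul_assoc, Real.mul_self_sqrt (hf0 δ)]; ring
  have r2 : ∀ δ, (√(f δ) * f δ)^2 = f δ ^ 3 := fun δ => by
    rw [mul_pow, Real.sq_sqrt (hf0 δ)]; ring
  have r3 : ∀ δ, √(f δ)^2 = f δ := fun δ => Real.sq_sqrt (hf0 δ)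
  have r4 : ∀ δ, f δ * f δ ^ 2 = f δ ^ 3 := fun δ => by ring
  have r5 : ∀ δ, (f δ ^ 2)^2 = f δ ^ 4 := fun δ => by ring
  simp only [r1, r2, r3, r4, r5] at c1 c2
  have n1 : 0 ≤ c * ∑ δ, f δ := mul_nonneg hc (Finset.sum_nonneg fun δ _ => hf0 δ)
  have n2 : 0 ≤ c * ∑ δ, f δ ^ 2 := mul_nonneg hc (Finset.sum_nonneg fun δ _ => by positivity)
  have n3 : 0 ≤ c * ∑ δ, f δ ^ 3 := mul_nonneg hc (Finset.sum_nonneg fun δ _ => pow_nonneg (hf0 δ) _)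
  generalize c * ∑ δ, f δ = a1 at *
  generalize c * ∑ δ, f δ ^ 2 = a2 at *
  generalize c * ∑ δ, f δ ^ 3 = a3 at *
  generalize c * ∑ δ, f δ ^ 4 = a4 at *
  rcases n2.eq_or_lt with h0 | h0
  · rw [← h0]; positivity
  have s1 : (a2^2)^2 ≤ (a1 * a3)^2 := pow_le_pow_left₀ (by positivity) c1 2
  have s2 : a1^2 * a3^2 ≤ a1^2 * (a2 * (K * a2^2)) :=
    mul_le_mul_of_nonneg_left (c2.trans (mul_le_mul_of_nonneg_left h4 n2)) (by positivity)
  have s3 : a2^3 * a2 ≤ a2^3 * (K * a1^2) := by nlinarith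
  exact le_of_mul_le_mul_left s3 (by positivity)

theorem mc_kahane (q : ℝ) (hq : 2 ≤ q) : ∃ K : ℝ, 0 < K ∧ ∀ (n : ℕ) (x : Fin n → X),
    ((2:ℝ)^n)⁻¹ * mcR (fun y : X => ‖y‖^q) n x 0 ≤
      (K * (((2:ℝ)^n)⁻¹ * mcR (fun y : X => ‖y‖) n x 0))^q := by
  obtain ⟨k, hk⟩ := exists_nat_ge q
  have hk0 : 0 < k := by
    have : (0:ℝ) < k := by linarith
    exact_mod_cast this
  obtain ⟨K1, hK1, h1⟩ := mc_kahane_two (X := X)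
  obtain ⟨K2, hK2, h2⟩ := mc_kahane_even (X := X) k hk0
  set D := K2 * K1^k
  have hD : 0 < D := by positivity
  have hkr : (0:ℝ) < ((2*k:ℕ):ℝ) := by positivity
  refine ⟨D^(((2*k:ℕ):ℝ)⁻¹), by positivity, fun n x => ?_⟩
  have g1 := h1 n x
  have g2 := h2 n x
  have n1 : 0 ≤ ((2:ℝ)^n)⁻¹ * mcR (fun y : X => ‖y‖) n x 0 :=
    mul_nonneg (by positivity) (Finset.sum_nonneg fun δ _ => by positivity)
  have n2 : 0 ≤ ((2:ℝ)^n)⁻¹ * mcR (fun y : X => ‖y‖^2) n x 0 :=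
    mul_nonneg (by positivity) (Finset.sum_nonneg fun δ _ => by positivity)
  have nq : 0 ≤ ((2:ℝ)^n)⁻¹ * mcR (fun y : X => ‖y‖^q) n x 0 :=
    mul_nonneg (by positivity) (Finset.sum_nonneg fun δ _ => by positivity)
  have g3 : (((2:ℝ)^n)⁻¹ * mcR (fun y : X => ‖y‖^q) n x 0)^(((2*k:ℕ):ℝ)/q) ≤
      ((2:ℝ)^n)⁻¹ * mcR (fun y : X => ‖y‖^(2*k)) n x 0 := by
    unfold mcR
    refine (mc_jensen _ (by simp) (by positivity) _ (fun i => by positivity) _ ?_).trans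
      (le_of_eq ?_)
    · rw [one_le_div (by linarith)]; push_cast; linarith
    · congr 1
      refine Finset.sum_congr rfl fun δ _ => ?_
      rw [← Real.rpow_mul (norm_nonneg _), mul_div_cancel₀ _ (by linarith), Real.rpow_natCast]
  have g4 : (((2:ℝ)^n)⁻¹ * mcR (fun y : X => ‖y‖^q) n x 0)^(((2*k:ℕ):ℝ)/q) ≤
      D * (((2:ℝ)^n)⁻¹ * mcR (fun y : X => ‖y‖) n x 0)^(2*k) := by
    refine g3.trans (g2.trans ?_)
    have := pow_le_pow_left₀ n2 g1 k
    rw [mul_pow K1, ← pow_mul _ 2 k] at this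
    have := mul_le_mul_of_nonneg_left this hK2.le
    simpa only [D, mul_assoc] using this
  generalize ((2:ℝ)^n)⁻¹ * mcR (fun y : X => ‖y‖^q) n x 0 = M at *
  generalize ((2:ℝ)^n)⁻¹ * mcR (fun y : X => ‖y‖) n x 0 = L at *
  have g5 := Real.rpow_le_rpow (by positivity) g4 (show 0 ≤ q / ((2*k:ℕ):ℝ) by positivity)
  rw [← Real.rpow_mul nq, div_mul_div_cancel₀' hkr.ne', div_self (by linarith), Real.rpow_one,
    Real.mul_rpow hD.le (by positivity), ← Real.rpow_natCast L, ← Real.rpow_mul n1,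
    mul_div_cancel₀ _ hkr.ne'] at g5
  rw [Real.mul_rpow (by positivity) n1, ← Real.rpow_mul hD.le, inv_mul_eq_div]
  exact g5
end

section
variable {X : Type*} [NormedAddCommGroup X] [NormedSpace ℝ X]

theorem mc_convex_rpow (q : ℝ) (hq : 1 ≤ q) : ConvexOn ℝ Set.univ (fun y : X => ‖y‖^q) := by
  refine ⟨convex_univ, fun u _ v _ a b ha hb hab => ?_⟩
  have h1 := (convexOn_univ_norm (E := X)).2 (Set.mem_univ u) (Set.mem_univ v) ha hb hab
  have h2 := (convexOn_rpow hq).2 (x := ‖u‖) (y := ‖v‖) (by simp) (by simp) ha hb hab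
  exact (Real.rpow_le_rpow (norm_nonneg _) h1 (by linarith)).trans h2

theorem mc_char_half (m : ℕ) [NeZero m] (hm : Even m) :
    ZMod.stdAddChar (((m / 2 : ℕ) : ZMod m)) = (-1 : ℂ) := by
  obtain ⟨k, rfl⟩ := hm
  have hk : (k:ℂ) ≠ 0 := by
    have := NeZero.ne (k + k)
    have : k ≠ 0 := by omega
    exact_mod_cast this
  have := ZMod.stdAddChar_coe (N := k + k) (((k + k) / 2 : ℕ) : ℤ)
  rw [Int.cast_natCast] at this
  rw [this, show (k + k) / 2 = k by omega, ← Complex.exp_pi_mul_I]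
  congr 1
  push_cast
  field_simp
  ring

theorem mc_char_norm (m : ℕ) [NeZero m] (z : ZMod m) : ‖(ZMod.stdAddChar z : ℂ)‖ = 1 := by
  rw [ZMod.stdAddChar_apply]; exact Circle.norm_coe _

theorem mc_char_small (m : ℕ) [NeZero m] (e : ({-1, 0, 1} : Finset ℤ)) :
    ‖ZMod.stdAddChar (((e : ℤ) : ZMod m)) - (1 : ℂ)‖ ≤ 2 * Real.pi / m := by
  rw [ZMod.stdAddChar_coe]
  have h := Real.norm_exp_I_mul_ofReal_sub_one_le (x := 2 * Real.pi * (e:ℤ) / m)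
  have : Complex.I * ((2 * Real.pi * (e:ℤ) / m : ℝ) : ℂ) = 2 * Real.pi * Complex.I * (e:ℤ) / m := by
    push_cast; ring
  rw [this] at h
  refine h.trans ?_
  have he : |((e:ℤ):ℝ)| ≤ 1 := by
    have := e.2
    simp only [Finset.mem_insert, Finset.mem_singleton] at this
    rcases this with h | h | h <;> rw [h] <;> simp
  rw [Real.norm_eq_abs, abs_div, abs_mul, abs_of_pos (show 0 < 2 * Real.pi by positivity),
    Nat.abs_cast]
  have := Real.pi_pos
  exact div_le_div_of_nonneg_right (by nlinarith) (Nat.cast_nonneg m)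

/-- The key averaged estimate. -/
theorem mc_sym (q : ℝ) (hq : 1 ≤ q) (n m : ℕ) [NeZero m] (hm : Even m) (φ : ℂ →ₗ[ℝ] ℝ)
    (hφ : ∀ z, |φ z| ≤ ‖z‖) (x : Fin n → X) (ε : Fin n → ({-1, 0, 1} : Finset ℤ)) :
    ∑ y : Fin n → ZMod m,
      ‖(∑ j, φ (ZMod.stdAddChar ((y + fun i => ((ε i : ℤ) : ZMod m)) j)) • x j)
        - ∑ j, φ (ZMod.stdAddChar (y j)) • x j‖^q
      ≤ (m:ℝ)^n * ((2 * Real.pi / m)^q * (((2:ℝ)^n)⁻¹ * mcR (fun y : X => ‖y‖^q) n x 0)) := by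
  have hm0 : (0:ℝ) < m := by exact_mod_cast Nat.pos_of_ne_zero (NeZero.ne m)
  set L : ℝ := 2 * Real.pi / m with hL
  have hL0 : 0 < L := by have := Real.pi_pos; positivity
  set a : (Fin n → ZMod m) → Fin n → ℝ := fun y j =>
    φ (ZMod.stdAddChar (y j) * (ZMod.stdAddChar (((ε j : ℤ) : ZMod m)) - 1)) with ha
  have haL : ∀ y j, |a y j| ≤ L := fun y j => by
    refine (hφ _).trans ?_
    rw [norm_mul, mc_char_norm, one_mul]
    exact mc_char_small m _
  have e1 : ∀ y : Fin n → ZMod m,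
      (∑ j, φ (ZMod.stdAddChar ((y + fun i => ((ε i : ℤ) : ZMod m)) j)) • x j)
        - ∑ j, φ (ZMod.stdAddChar (y j)) • x j = ∑ j, a y j • x j := fun y => by
    rw [← Finset.sum_sub_distrib]
    refine Finset.sum_congr rfl fun j _ => ?_
    rw [← sub_smul, ← map_sub, Pi.add_apply, AddChar.map_add_eq_mul]
    simp only [ha]; congr 2; ring
  simp only [e1]
  have e2 : ∀ δ : Fin n → Bool, ∑ y, ‖∑ j, a y j • x j‖^q
      = ∑ y, ‖0 + ∑ j, mcSgn (δ j) • a y j • x j‖^q := fun δ => by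
    refine Fintype.sum_equiv
      (Equiv.addRight (fun j => if δ j then (0 : ZMod m) else ((m/2 : ℕ) : ZMod m))) _ _ fun y => ?_
    congr 2
    rw [zero_add]
    refine Finset.sum_congr rfl fun j _ => ?_
    rw [smul_smul]
    congr 1
    simp only [ha, mcSgn, Equiv.coe_addRight, Pi.add_apply, AddChar.map_add_eq_mul]
    cases δ j
    · simp [mc_char_half m hm]
    · simp
  have e3 : ∑ y, ‖∑ j, a y j • x j‖^q
      = ((2:ℝ)^n)⁻¹ * ∑ y, mcR (fun y : X => ‖y‖^q) n (fun j => a y j • x j) 0 := by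
    unfold mcR
    rw [Finset.sum_comm, Finset.sum_congr rfl fun δ _ => (e2 δ).symm]
    simp
  rw [e3]
  have e4 : ∀ y, mcR (fun y : X => ‖y‖^q) n (fun j => a y j • x j) 0
      ≤ L^q * mcR (fun y : X => ‖y‖^q) n x 0 := fun y => by
    have c := mc_contraction (mc_convex_rpow (X := X) q hq) n (fun j => L • x j) (fun j => a y j / L)
      (fun j => by rw [abs_div, abs_of_pos hL0, div_le_one hL0]; exact haL y j) 0
    simp only [smul_smul, div_mul_cancel₀ _ hL0.ne'] at c
    refine c.trans (le_of_eq ?_)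
    unfold mcR
    rw [Finset.mul_sum]
    refine Finset.sum_congr rfl fun δ _ => ?_
    simp only [zero_add]
    rw [← Real.mul_rpow hL0.le (norm_nonneg _), ← norm_smul_of_nonneg hL0.le, Finset.smul_sum]
    simp only [smul_smul, mul_comm]
  calc _ ≤ ((2:ℝ)^n)⁻¹ * ∑ y : Fin n → ZMod m, L^q * mcR (fun y : X => ‖y‖^q) n x 0 := by
        gcongr with y; exact e4 y
    _ = _ := by
      rw [Finset.sum_const, Finset.card_univ, nsmul_eq_mul]
      simp [ZMod.card]
      ring

theorem mc_lhs (q : ℝ) (n m : ℕ) [NeZero m] (hm : Even m) (φ : ℂ →ₗ[ℝ] ℝ)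
    (x : Fin n → X) (j : Fin n) (y : Fin n → ZMod m) :
      ‖(∑ k, φ (ZMod.stdAddChar
          ((y + fun i => if i = j then ((m / 2 : ℕ) : ZMod m) else 0) k)) • x k)
        - ∑ k, φ (ZMod.stdAddChar (y k)) • x k‖^q
      = |2 * φ (ZMod.stdAddChar (y j))|^q * ‖x j‖^q := by
  rw [← Real.mul_rpow (abs_nonneg _) (norm_nonneg _), ← Real.norm_eq_abs, ← norm_smul,
    ← Finset.sum_sub_distrib, Finset.sum_eq_single j]
  · congr 1
    rw [← norm_neg]
    congr 1
    simp only [Pi.add_apply, if_true, AddChar.map_add_eq_mul, mc_char_half m hm]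
    rw [mul_neg_one, map_neg]
    module
  · intro b _ hb
    simp [hb]
  · simp

theorem mc_metric_to_rad (q : ℝ) (hq : 2 ≤ q) (h : MetricCotype X q) : RademacherCotype X q := by
  obtain ⟨C, hC, h⟩ := h
  obtain ⟨K, hK, hKah⟩ := mc_kahane (X := X) q hq
  have hpi := Real.pi_pos
  have hq0 : 0 < q := by linarith
  refine ⟨2 * (2 * Real.pi * C) * K, by positivity, fun n x => ?_⟩
  rcases Nat.eq_zero_or_pos n with rfl | hn
  · simp [Real.zero_rpow, hq0.ne']
  obtain ⟨m, hm0, hm, hf⟩ := h n hn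
  have : NeZero m := ⟨hm0⟩
  have hm1 : (0:ℝ) < m := by exact_mod_cast Nat.pos_of_ne_zero hm0
  set M := ((2:ℝ)^n)⁻¹ * mcR (fun y : X => ‖y‖^q) n x 0 with hM
  have hM0 : 0 ≤ M := 
    mul_nonneg (by positivity) (Finset.sum_nonneg fun δ _ => by positivity)
  have key : ∀ φ : ℂ →ₗ[ℝ] ℝ, (∀ z, |φ z| ≤ ‖z‖) →
      ∑ j : Fin n, ∑ y : Fin n → ZMod m, |2 * φ (ZMod.stdAddChar (y j))|^q * ‖x j‖^q
        ≤ (m:ℝ)^n * ((2 * Real.pi * C)^q * M) := fun φ hφ => by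
    have := hf (fun y => ∑ j, φ (ZMod.stdAddChar (y j)) • x j)
    simp only [mc_lhs q n m hm φ x] at this
    refine this.trans ?_
    calc _ ≤ (C * m) ^ q / 3 ^ n * ∑ ε : Fin n → ({-1, 0, 1} : Finset ℤ),
          ((m:ℝ)^n * ((2 * Real.pi / m)^q * M)) := by
          gcongr with ε
          exact mc_sym q (by linarith) n m hm φ hφ x ε
      _ = _ := by
        rw [Finset.sum_const, Finset.card_univ, nsmul_eq_mul]
        have : Fintype.card (Fin n → ({-1, 0, 1} : Finset ℤ)) = 3^n := by simp
        rw [this]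
        push_cast
        have e : (2 * Real.pi * C)^q = (C * m)^q * (2 * Real.pi / m)^q := by
          rw [← Real.mul_rpow (by positivity) (by positivity)]
          congr 1; field_simp
        rw [e]
        field_simp
  have k1 := key Complex.reLm (fun z => Complex.abs_re_le_norm z)
  have k2 := key Complex.imLm (fun z => Complex.abs_im_le_norm z)
  have low : (m:ℝ)^n * ∑ j, ‖x j‖^q ≤ 
      ∑ j : Fin n, ∑ y : Fin n → ZMod m, |2 * Complex.reLm (ZMod.stdAddChar (y j))|^q * ‖x j‖^q
      + ∑ j : Fin n, ∑ y : Fin n → ZMod m, |2 * Complex.imLm (ZMod.stdAddChar (y j))|^q * ‖x j‖^q := by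
    rw [← Finset.sum_add_distrib, Finset.mul_sum]
    refine Finset.sum_le_sum fun j _ => ?_
    rw [← Finset.sum_add_distrib]
    calc (m:ℝ)^n * ‖x j‖^q = ∑ y : Fin n → ZMod m, ‖x j‖^q := by simp [ZMod.card]
      _ ≤ _ := by
        refine Finset.sum_le_sum fun y _ => ?_
        rw [← add_mul]
        refine le_mul_of_one_le_left (by positivity) ?_
        have hn := mc_char_norm m (y j)
        generalize (ZMod.stdAddChar (y j) : ℂ) = z at hn
        simp only [Complex.reLm_coe, Complex.imLm_coe]
        have hz : z.re * z.re + z.im * z.im = 1 := by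
          rw [← Complex.normSq_apply, Complex.normSq_eq_norm_sq, hn]; norm_num
        have p1 : 0 ≤ |2 * z.re|^q := by positivity
        have p2 : 0 ≤ |2 * z.im|^q := by positivity
        by_cases hc : 1 ≤ |2 * z.re|
        · have := Real.one_le_rpow hc hq0.le; linarith
        · have : 1 ≤ |2 * z.im| := by
            by_contra! h'
            push Not at hc
            have a1 := (sq_lt_one_iff_abs_lt_one _).2 hc
            have a2 := (sq_lt_one_iff_abs_lt_one _).2 h'
            nlinarith
          have := Real.one_le_rpow this hq0.le; linarith
  have tot : ∑ j, ‖x j‖^q ≤ 2 * ((2 * Real.pi * C)^q * M) := by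
    refine le_of_mul_le_mul_left (a := (m:ℝ)^n) ?_ (by positivity)
    linarith
  have hk := hKah n x
  set A := ((2:ℝ)^n)⁻¹ * mcR (fun y : X => ‖y‖) n x 0 with hA
  have hA0 : 0 ≤ A := 
    mul_nonneg (by positivity) (Finset.sum_nonneg fun δ _ => by positivity)
  have goalA : ((2 : ℝ) ^ n)⁻¹ *
        ∑ ε : Fin n → Bool, ‖∑ i : Fin n, (if ε i then (1 : ℝ) else -1) • x i‖ = A := by
    simp only [hA, mcR, mcSgn, zero_add]
  rw [goalA]
  have fin : ∑ j, ‖x j‖^q ≤ (2 * (2 * Real.pi * C) * K * A)^q := by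
    refine tot.trans ?_
    have h2 : (2:ℝ) ≤ 2^q := by
      have := Real.rpow_le_rpow_of_exponent_le (show (1:ℝ) ≤ 2 by norm_num) (show 1 ≤ q by linarith)
      simpa using this
    have hB : 0 ≤ 2 * Real.pi * C := by positivity
    generalize 2 * Real.pi * C = B at hB
    have e : (2 * B * K * A)^q = 2^q * (B^q * (K * A)^q) := by
      rw [← Real.mul_rpow hB (by positivity), ← Real.mul_rpow (by norm_num) (by positivity)]
      congr 1; ring
    rw [e]
    exact mul_le_mul h2 (mul_le_mul_of_nonneg_left hk (by positivity)) (by positivity) (by positivity)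
  rw [one_div, Real.rpow_inv_le_iff_of_pos (Finset.sum_nonneg fun j _ => by positivity)
    (by positivity) hq0]
  exact fin

end

/-- Abstract smoothing by averaging commuting isometries. -/
theorem mc_smooth {E ι : Type*} [NormedAddCommGroup E] [NormedSpace ℝ E] (T : ι → E →ₗᵢ[ℝ] E)
    (hT : ∀ i j h, T i (T j h) = T j (T i h)) (K : ℕ) (hK : 0 < K) (s : Finset ι) :
    ∃ P : E →ₗ[ℝ] E, (∀ i h, T i (P h) = P (T i h)) ∧ (∀ h, ‖P h‖ ≤ ‖h‖) ∧
      (∀ i ∈ s, ∀ h, ‖T i (P h) - P h‖ ≤ 2 / K * ‖h‖) ∧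
      (∀ h, ‖P h - h‖ ≤ K * ∑ i ∈ s, ‖T i h - h‖) := by
  classical
  have hK0 : (0:ℝ) < K := by exact_mod_cast hK
  induction s using Finset.induction_on with
  | empty => exact ⟨LinearMap.id, by simp, by simp, by simp, by simp⟩
  | insert j s hj ih =>
    obtain ⟨P, hc, hn, hs, hd⟩ := ih
    set A : E →ₗ[ℝ] E := (T j).toLinearMap with hA
    have hAT : ∀ h, A h = T j h := fun h => rfl
    set Q : E →ₗ[ℝ] E := (K:ℝ)⁻¹ • ∑ t ∈ Finset.range K, A ^ t with hQ
    have hQa : ∀ h, Q h = (K:ℝ)⁻¹ • ∑ t ∈ Finset.range K, (A ^ t) h := fun h => by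
      simp [hQ, LinearMap.sum_apply]
    have hAc : ∀ (t : ℕ) i h, T i ((A ^ t) h) = (A ^ t) (T i h) := fun t i => by
      induction t with
      | zero => simp
      | succ t ih => intro h; rw [pow_succ, Module.End.mul_apply, ih, Module.End.mul_apply, hAT, hT, hAT]
    have hAn : ∀ (t : ℕ) h, ‖(A ^ t) h‖ = ‖h‖ := fun t => by
      induction t with
      | zero => simp
      | succ t ih => intro h; rw [pow_succ, Module.End.mul_apply, ih, hAT, (T j).norm_map]
    have hAd : ∀ (t : ℕ) h, ‖(A ^ t) h - h‖ ≤ t * ‖T j h - h‖ := fun t h => by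
      induction t with
      | zero => simp
      | succ t ih =>
        rw [pow_succ, Module.End.mul_apply]
        have : (A ^ t) (A h) - h = (A ^ t) (A h - h) + ((A ^ t) h - h) := by
          rw [map_sub]; abel
        rw [this]
        refine (norm_add_le _ _).trans ?_
        rw [hAn, hAT]
        push_cast
        linarith
    have hQc : ∀ i h, T i (Q h) = Q (T i h) := fun i h => by
      rw [hQa, hQa, map_smul, map_sum]
      simp only [hAc]
    have hQn : ∀ h, ‖Q h‖ ≤ ‖h‖ := fun h => by
      rw [hQa, norm_smul_of_nonneg (by positivity), inv_mul_le_iff₀ hK0]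
      refine (norm_sum_le _ _).trans ?_
      simp [hAn]
    have hQj : ∀ h, ‖T j (Q h) - Q h‖ ≤ 2 / K * ‖h‖ := fun h => by
      have : T j (Q h) - Q h = (K:ℝ)⁻¹ • ((A ^ K) h - h) := by
        have t := Finset.sum_range_sub (fun t => (A ^ t) h) K
        simp only [pow_zero, Module.End.one_apply] at t
        rw [hQc, hQa, hQa, ← smul_sub, ← Finset.sum_sub_distrib, ← t]
        simp only [pow_succ, Module.End.mul_apply, hAT]
      rw [this, norm_smul_of_nonneg (by positivity)]
      have : ‖(A ^ K) h - h‖ ≤ ‖h‖ + ‖h‖ := (norm_sub_le _ _).trans (by rw [hAn])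
      calc _ ≤ (K:ℝ)⁻¹ * (‖h‖ + ‖h‖) := by gcongr
        _ = _ := by ring
    have hQd : ∀ h, ‖Q h - h‖ ≤ K * ‖T j h - h‖ := fun h => by
      have : Q h - h = (K:ℝ)⁻¹ • ∑ t ∈ Finset.range K, ((A ^ t) h - h) := by
        rw [hQa, Finset.sum_sub_distrib, smul_sub]
        congr 1
        rw [Finset.sum_const, Finset.card_range, ← Nat.cast_smul_eq_nsmul ℝ, smul_smul,
          inv_mul_cancel₀ hK0.ne', one_smul]
      rw [this, norm_smul_of_nonneg (by positivity), inv_mul_le_iff₀ hK0]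
      refine (norm_sum_le _ _).trans ?_
      refine (Finset.sum_le_card_nsmul _ _ (K * ‖T j h - h‖) fun t ht => ?_).trans (by simp)
      refine (hAd t h).trans ?_
      gcongr
      exact (Finset.mem_range.1 ht).le
    refine ⟨Q ∘ₗ P, fun i h => ?_, fun h => (hQn _).trans (hn h), ?_, fun h => ?_⟩
    · simp only [LinearMap.comp_apply]; rw [hQc, hc]
    · intro i hi h
      simp only [LinearMap.comp_apply]
      rcases Finset.mem_insert.1 hi with rfl | hi
      · refine (hQj _).trans ?_
        gcongr
        exact hn h
      · rw [hQc, ← map_sub]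
        exact (hQn _).trans (hs i hi h)
    · simp only [LinearMap.comp_apply]
      rw [Finset.sum_insert hj, mul_add]
      have : Q (P h) - h = Q (P h - h) + (Q h - h) := by rw [map_sub]; abel
      rw [this]
      refine (norm_add_le _ _).trans ?_
      linarith [hQn (P h - h), hd h, hQd h]

section
variable {X : Type*} [NormedAddCommGroup X] [NormedSpace ℝ X]

theorem mc_cotype3 (q : ℝ) (hq : 2 ≤ q) (h : RademacherCotype X q) :
    ∃ C : ℝ, 0 < C ∧ ∀ (n : ℕ) (x : Fin n → X), ∑ i, ‖x i‖^q ≤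
      C^q * (((3:ℝ)^n)⁻¹ * ∑ ε : Fin n → ({-1, 0, 1} : Finset ℤ),
        ‖∑ i, ((ε i : ℤ) : ℝ) • x i‖^q) := by
  obtain ⟨C, hC, h⟩ := h
  have hq0 : 0 < q := by linarith
  refine ⟨C * (3/2), by positivity, fun n x => ?_⟩
  have h1 := h n x
  have h2 := mc_three (convexOn_univ_norm (E := X)) n x 0
  have e1 : ∑ ε : Fin n → Bool, ‖∑ i : Fin n, (if ε i then (1 : ℝ) else -1) • x i‖
      = mcR (norm : X → ℝ) n x 0 := by simp only [mcR, mcSgn, zero_add]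
  have e2 : mcQ (norm : X → ℝ) n (fun i => (3/2:ℝ) • x i) 0 =
      (3/2) * ∑ ε : Fin n → ({-1, 0, 1} : Finset ℤ), ‖∑ i, ((ε i : ℤ) : ℝ) • x i‖ := by
    unfold mcQ
    rw [Finset.mul_sum]
    refine Finset.sum_congr rfl fun δ _ => ?_
    simp only [zero_add, smul_comm _ (3/2:ℝ), ← Finset.smul_sum,
      norm_smul_of_nonneg (show (0:ℝ) ≤ 3/2 by norm_num)]
  rw [e1] at h1
  rw [e2] at h2
  have h3 := mc_jensen (((3:ℝ)^n)⁻¹) (by simp) (by positivity)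
    (fun ε : Fin n → ({-1, 0, 1} : Finset ℤ) => ‖∑ i, ((ε i : ℤ) : ℝ) • x i‖)
    (fun _ => norm_nonneg _) q (by linarith)
  have hS : 0 ≤ ((3:ℝ)^n)⁻¹ * ∑ ε : Fin n → ({-1, 0, 1} : Finset ℤ), ‖∑ i, ((ε i : ℤ) : ℝ) • x i‖ := by
    positivity
  have h4 : (∑ i, ‖x i‖^q)^(1/q) ≤ C * (3/2) * (((3:ℝ)^n)⁻¹ *
      ∑ ε : Fin n → ({-1, 0, 1} : Finset ℤ), ‖∑ i, ((ε i : ℤ) : ℝ) • x i‖) := by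
    have := mul_le_mul_of_nonneg_left h2 hC.le
    linarith
  rw [one_div, Real.rpow_inv_le_iff_of_pos (Finset.sum_nonneg fun j _ => by positivity)
    (by positivity) hq0, Real.mul_rpow (by positivity) hS] at h4
  refine h4.trans ?_
  gcongr

end

def mcJ (n m : ℕ) (a : Fin n → ℤ) : Fin n → ZMod m := fun i => (a i : ZMod m)

theorem mcJ_add (n m : ℕ) (a b : Fin n → ℤ) : mcJ n m (a + b) = mcJ n m a + mcJ n m b := by
  funext i; simp [mcJ]

theorem mcJ_zero (n m : ℕ) : mcJ n m 0 = 0 := by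
  funext i; simp [mcJ]

theorem mc_core {E : Type*} [NormedAddCommGroup E] [NormedSpace ℝ E] (n m : ℕ)
    (T : (Fin n → ZMod m) → E →ₗᵢ[ℝ] E) (hT0 : ∀ h, T 0 h = h)
    (hTa : ∀ y z h, T (y + z) h = T y (T z h)) (f : E) (B : ℝ)
    (hB : ∀ ε : Fin n → ({-1, 0, 1} : Finset ℤ), ‖T (mcJ n m fun i => ε i) f - f‖ ≤ B)
    (K : ℕ) (hK : 0 < K) :
    ∃ g : E, ‖g - f‖ ≤ K * (3^n * B) ∧
      (∀ ε : Fin n → ({-1, 0, 1} : Finset ℤ),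
        ‖T (mcJ n m fun i => ε i) g - g‖ ≤ ‖T (mcJ n m fun i => ε i) f - f‖) ∧
      (∀ ε : Fin n → ({-1, 0, 1} : Finset ℤ),
        ‖∑ j, ((ε j : ℤ) : ℝ) • (T (mcJ n m (Pi.single j 1)) g - g)
          - (T (mcJ n m fun i => ε i) g - g)‖ ≤ n * (2 * (2 / K * B))) := by
  have hcomm : ∀ y z h, T y (T z h) = T z (T y h) := fun y z h => by
    rw [← hTa, ← hTa, add_comm]
  obtain ⟨P, hc, hn, hs, hd⟩ := mc_smooth
    (fun ε : Fin n → ({-1, 0, 1} : Finset ℤ) => T (mcJ n m fun i => ε i))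
    (fun i j h => hcomm _ _ h) K hK Finset.univ
  have hK0 : (0:ℝ) < K := by exact_mod_cast hK
  refine ⟨P f, ?_, ?_, ?_⟩
  · refine (hd f).trans ?_
    gcongr
    refine (Finset.sum_le_card_nsmul _ _ B fun ε _ => hB ε).trans (le_of_eq ?_)
    simp
  · intro ε
    rw [hc, ← map_sub]; exact hn _
  · set g := P f with hg
    set η := 2 / K * B with hη
    have hB0 : 0 ≤ B := (norm_nonneg _).trans (hB fun _ => ⟨0, by simp⟩)
    have hη0 : 0 ≤ η := by positivity
    have H2 : ∀ a b : Fin n → ℤ, (∀ i, a i ∈ ({-1, 0, 1} : Finset ℤ)) →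
        (∀ i, b i ∈ ({-1, 0, 1} : Finset ℤ)) →
        ‖T (mcJ n m a) (T (mcJ n m b) g - g) - (T (mcJ n m b) g - g)‖ ≤ η := by
      intro a b ha hb
      have e : T (mcJ n m b) g - g = P (T (mcJ n m b) f - f) := by
        have := hc (fun i => ⟨b i, hb i⟩) f
        simp only at this
        rw [map_sub, hg, this]
      rw [e]
      refine (hs (fun i => ⟨a i, ha i⟩) (Finset.mem_univ _) _).trans ?_
      rw [hη]
      gcongr
      exact hB (fun i => ⟨b i, hb i⟩)
    have hsing : ∀ (j : Fin n) (c : ℤ), c ∈ ({-1, 0, 1} : Finset ℤ) →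
        ∀ i, (Pi.single j c : Fin n → ℤ) i ∈ ({-1, 0, 1} : Finset ℤ) := by
      intro j c hc i
      by_cases h : i = j
      · subst h; simpa using hc
      · simp [h]
    have H1 : ∀ (j : Fin n) (c : ℤ), c ∈ ({-1, 0, 1} : Finset ℤ) →
        ‖(c : ℝ) • (T (mcJ n m (Pi.single j 1)) g - g) - (T (mcJ n m (Pi.single j c)) g - g)‖ ≤ η := by
      intro j c hc
      have := hc
      simp only [Finset.mem_insert, Finset.mem_singleton] at this
      rcases this with rfl | rfl | rfl
      · have h := H2 (Pi.single j 1) (Pi.single j (-1)) (hsing j 1 (by simp)) (hsing j (-1) (by simp))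
        refine le_trans (le_of_eq ?_) h
        congr 1
        rw [map_sub, ← hTa, ← mcJ_add, ← Pi.single_add]
        simp only [add_neg_cancel, Pi.single_zero, mcJ_zero, hT0]
        push_cast
        module
      · simp [mcJ_zero, hT0, hη0]
      · simp [hη0]
    intro ε
    have main : ∀ S : Finset (Fin n),
        ‖∑ j ∈ S, ((ε j : ℤ) : ℝ) • (T (mcJ n m (Pi.single j 1)) g - g)
          - (T (mcJ n m fun i => if i ∈ S then (ε i : ℤ) else 0) g - g)‖ ≤ S.card * (2 * η) := by
      intro S
      induction S using Finset.induction_on with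
      | empty =>
        have : (fun i : Fin n => if i ∈ (∅ : Finset (Fin n)) then (ε i : ℤ) else 0) = 0 := by
          funext i; simp
        rw [this]; simp [mcJ_zero, hT0]
      | insert j S hj ih =>
        set a : Fin n → ℤ := fun i => if i ∈ S then (ε i : ℤ) else 0 with ha
        have e : (fun i => if i ∈ insert j S then (ε i : ℤ) else 0) = a + Pi.single j (ε j : ℤ) := by
          funext i
          by_cases h : i = j
          · subst h; simp [ha, hj]
          · simp [ha, h]
        have haV : ∀ i, a i ∈ ({-1, 0, 1} : Finset ℤ) := fun i => by
          simp only [ha]; split_ifs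
          · exact (ε i).2
          · simp
        rw [e, mcJ_add, hTa, Finset.sum_insert hj, Finset.card_insert_of_notMem hj]
        have h2 := H2 a (Pi.single j (ε j : ℤ)) haV (hsing j _ (ε j).2)
        have h1 := H1 j (ε j) (ε j).2
        rw [map_sub] at h2
        set s1 := ∑ j ∈ S, ((ε j : ℤ) : ℝ) • (T (mcJ n m (Pi.single j 1)) g - g)
        set s2 := ((ε j : ℤ) : ℝ) • (T (mcJ n m (Pi.single j 1)) g - g)
        set t1 := T (mcJ n m a) g
        set t2 := T (mcJ n m (Pi.single j (ε j : ℤ))) g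
        set t3 := T (mcJ n m a) t2
        have : s2 + s1 - (t3 - g) = (s1 - (t1 - g)) + (s2 - (t2 - g)) - (t3 - t1 - (t2 - g)) := by abel
        rw [this]
        refine (norm_sub_le _ _).trans ((add_le_add_left (norm_add_le _ _) _).trans ?_)
        push_cast
        linarith
    have := main Finset.univ
    simpa using this

theorem mc_add_rpow (q : ℝ) (hq : 0 ≤ q) (a b : ℝ) (ha : 0 ≤ a) (hb : 0 ≤ b) :
    (a + b)^q ≤ 2^q * (a^q + b^q) := by
  have p1 : 0 ≤ a^q := by positivity
  have p2 : 0 ≤ b^q := by positivity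
  rcases le_total a b with h | h
  · calc (a + b)^q ≤ (2 * b)^q := Real.rpow_le_rpow (by positivity) (by linarith) hq
      _ = 2^q * b^q := Real.mul_rpow (by norm_num) hb
      _ ≤ _ := by gcongr; linarith
  · calc (a + b)^q ≤ (2 * a)^q := Real.rpow_le_rpow (by positivity) (by linarith) hq
      _ = 2^q * a^q := Real.mul_rpow (by norm_num) ha
      _ ≤ _ := by gcongr; linarith

section
variable {X : Type*} [NormedAddCommGroup X] [NormedSpace ℝ X]

theorem mc_norm_pow (q : ℝ) (hq : 2 ≤ q) {ι : Type*} [Fintype ι] 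
    (F : PiLp (ENNReal.ofReal q) (fun _ : ι => X)) : ‖F‖^q = ∑ x, ‖F x‖^q := by
  have e : (ENNReal.ofReal q).toReal = q := ENNReal.toReal_ofReal (by linarith)
  rw [PiLp.norm_eq_sum (by rw [e]; linarith), e, one_div,
    Real.rpow_inv_rpow (Finset.sum_nonneg fun j _ => by positivity) (by linarith)]

theorem mc_rad_to_metric (q : ℝ) (hq : 2 ≤ q) (h : RademacherCotype X q) : MetricCotype X q := by
  obtain ⟨C, hC, h⟩ := mc_cotype3 q hq h
  have hq0 : 0 < q := by linarith
  refine ⟨4 * C + 1, by positivity, fun n hn => ?_⟩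
  set K : ℕ := 4 * n * 3^n with hKdef
  have hK : 0 < K := by positivity
  set m : ℕ := 4 * n * K * 9^n with hmdef
  have hm : m ≠ 0 := by positivity
  refine ⟨m, hm, ⟨2 * n * K * 9^n, by rw [hmdef]; ring⟩, ?_⟩
  have : NeZero m := ⟨hm⟩
  intro f
  have hn1 : (1:ℝ) ≤ n := by exact_mod_cast hn
  have hp : Fact (1 ≤ ENNReal.ofReal q) := ⟨by
    rw [← ENNReal.ofReal_one]; exact ENNReal.ofReal_le_ofReal (by linarith)⟩
  set T : (Fin n → ZMod m) → (PiLp (ENNReal.ofReal q) (fun _ : Fin n → ZMod m => X)) →ₗᵢ[ℝ]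
      (PiLp (ENNReal.ofReal q) (fun _ : Fin n → ZMod m => X)) := fun y =>
    (LinearIsometryEquiv.piLpCongrLeft (ENNReal.ofReal q) ℝ X (Equiv.addRight y).symm).toLinearIsometry
    with hT
  have hTx : ∀ y F x, T y F x = F (x + y) := fun y F x => rfl
  set F : PiLp (ENNReal.ofReal q) (fun _ : Fin n → ZMod m => X) := WithLp.toLp _ f with hF
  have hFx : ∀ x, F x = f x := fun x => rfl
  have hT0 : ∀ h, T 0 h = h := fun h => by ext x; rw [hTx, add_zero]
  have hTa : ∀ y z h, T (y + z) h = T y (T z h) := fun y z h => by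
    ext x; rw [hTx, hTx, hTx, add_assoc]
  have hdiff : ∀ y, ∑ x, ‖f (x + y) - f x‖^q = ‖T y F - F‖^q := fun y => by
    rw [mc_norm_pow q hq]; rfl
  simp only [hdiff]
  change _ ≤ _ * ∑ ε : Fin n → ({-1, 0, 1} : Finset ℤ), ‖T (mcJ n m fun i => ε i) F - F‖^q
  set S := ∑ ε : Fin n → ({-1, 0, 1} : Finset ℤ), ‖T (mcJ n m fun i => ε i) F - F‖^q with hS
  have hS0 : 0 ≤ S := Finset.sum_nonneg fun j _ => by positivity
  set A := (S / 3^n)^(q⁻¹) with hA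
  have hA0 : 0 ≤ A := by positivity
  have hAq : A^q = S / 3^n := Real.rpow_inv_rpow (by positivity) hq0.ne'
  have h3 : (1:ℝ) ≤ 3^n := one_le_pow₀ (by norm_num)
  have hself : ∀ t : ℝ, 1 ≤ t → t ≤ t^q := fun t ht => by
    have := Real.rpow_le_rpow_of_exponent_le ht (show 1 ≤ q by linarith)
    simpa using this
  have hB : ∀ ε : Fin n → ({-1, 0, 1} : Finset ℤ), ‖T (mcJ n m fun i => ε i) F - F‖ ≤ 3^n * A := by
    intro ε
    rw [← Real.rpow_le_rpow_iff (norm_nonneg _) (by positivity) hq0,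
      Real.mul_rpow (by positivity) hA0, hAq]
    calc _ ≤ S := Finset.single_le_sum
            (f := fun ε : Fin n → ({-1, 0, 1} : Finset ℤ) => ‖T (mcJ n m fun i => ε i) F - F‖^q)
            (fun i _ => by positivity) (Finset.mem_univ ε)
      _ = 3^n * (S / 3^n) := by field_simp
      _ ≤ _ := by gcongr; exact hself _ h3
  obtain ⟨g, g1, g2, g3⟩ := mc_core n m T hT0 hTa F (3^n * A) hB K hK
  have hKr : (K:ℝ) = 4 * n * 3^n := by rw [hKdef]; push_cast; ring
  have herr : (n:ℝ) * (2 * (2 / K * (3^n * A))) = A := by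
    rw [hKr]; field_simp; ring
  rw [herr] at g3
  set v : Fin n → PiLp (ENNReal.ofReal q) (fun _ : Fin n → ZMod m => X) :=
    fun j => T (mcJ n m (Pi.single j 1)) g - g with hv
  have step1 : ∑ j, ‖v j‖^q ≤ C^q * (((3:ℝ)^n)⁻¹ * ∑ ε : Fin n → ({-1, 0, 1} : Finset ℤ),
      ‖∑ j, ((ε j : ℤ) : ℝ) • v j‖^q) := by
    simp only [mc_norm_pow q hq]
    rw [Finset.sum_comm, Finset.sum_comm (s := (Finset.univ : Finset (Fin n → ({-1, 0, 1} : Finset ℤ)))),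
      Finset.mul_sum, Finset.mul_sum]
    refine Finset.sum_le_sum fun x _ => ?_
    refine (h n (fun j => v j x)).trans (le_of_eq ?_)
    congr 2
    refine Finset.sum_congr rfl fun ε _ => ?_
    congr 2
    simp
  have step2 : ∑ ε : Fin n → ({-1, 0, 1} : Finset ℤ), ‖∑ j, ((ε j : ℤ) : ℝ) • v j‖^q
      ≤ 2^q * (S + 3^n * A^q) := by
    calc _ ≤ ∑ ε : Fin n → ({-1, 0, 1} : Finset ℤ),
          2^q * (‖T (mcJ n m fun i => ε i) F - F‖^q + A^q) := by
          refine Finset.sum_le_sum fun ε _ => ?_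
          refine le_trans (Real.rpow_le_rpow (norm_nonneg _) ?_ hq0.le)
            (mc_add_rpow q hq0.le _ _ (norm_nonneg _) hA0)
          have := norm_le_norm_add_norm_sub (T (mcJ n m fun i => ε i) g - g)
            (∑ j, ((ε j : ℤ) : ℝ) • v j)
          have a1 := g3 ε
          have a2 := g2 ε
          rw [norm_sub_rev] at a1
          linarith
      _ = _ := by
        rw [← Finset.mul_sum, Finset.sum_add_distrib]
        simp [hS]
  have step3 : ∑ j, ‖v j‖^q ≤ (4 * C * A)^q := by
    refine step1.trans ?_
    calc _ ≤ C^q * (((3:ℝ)^n)⁻¹ * (2^q * (S + 3^n * A^q))) := by gcongr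
      _ = 2 * 2^q * C^q * A^q := by rw [hAq]; field_simp; ring
      _ ≤ 2^q * 2^q * C^q * A^q := by gcongr; exact hself 2 (by norm_num)
      _ = _ := by
        rw [← Real.mul_rpow (by norm_num) (by norm_num), ← Real.mul_rpow (by norm_num) (by positivity),
          ← Real.mul_rpow (by positivity) (by positivity)]
        norm_num
  have tele : ∀ (y : Fin n → ZMod m) (k : ℕ), ‖T (k • y) g - g‖ ≤ k * ‖T y g - g‖ := by
    intro y k
    induction k with
    | zero => simp [hT0]
    | succ k ih =>
      rw [succ_nsmul, hTa]
      have : T (k • y) (T y g) - g = T (k • y) (T y g - g) + (T (k • y) g - g) := by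
        rw [map_sub]; abel
      rw [this]
      refine (norm_add_le _ _).trans ?_
      rw [LinearIsometry.norm_map]
      push_cast; linarith
  have hmr : (m:ℝ) = 4 * n * K * 9^n := by rw [hmdef]; push_cast; ring
  have hm2 : ((m/2 : ℕ) : ℝ) ≤ m / 2 := Nat.cast_div_le
  have h9 : (9:ℝ)^n = 3^n * 3^n := by rw [← mul_pow]; norm_num
  set R : ℝ := K * 9^n * A with hR
  have hR0 : 0 ≤ R := by positivity
  have step4 : ∀ j : Fin n,
      ‖T (fun i => if i = j then ((m / 2 : ℕ) : ZMod m) else 0) F - F‖^q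
        ≤ (m:ℝ)^q * ‖v j‖^q + (4 * R)^q := by
    intro j
    have ey : (fun i => if i = j then ((m / 2 : ℕ) : ZMod m) else 0)
        = (m/2) • mcJ n m (Pi.single j 1) := by
      funext i
      by_cases hij : i = j
      · subst hij; simp [mcJ]
      · simp [mcJ, hij]
    rw [ey]
    set y := (m/2) • mcJ n m (Pi.single j 1) with hy
    have t := tele (mcJ n m (Pi.single j 1)) (m/2)
    have e : T y F - F = (T y g - g) - T y (g - F) + (g - F) := by rw [map_sub]; abel
    have b : ‖T y F - F‖ ≤ (m/2) * ‖v j‖ + 2 * R := by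
      rw [e]
      refine (norm_add_le _ _).trans ((add_le_add_left (norm_sub_le _ _) _).trans ?_)
      rw [LinearIsometry.norm_map]
      have : (K:ℝ) * (3^n * (3^n * A)) = R := by rw [hR, h9]; ring
      rw [this] at g1
      have := mul_le_mul_of_nonneg_right hm2 (norm_nonneg (v j))
      linarith
    refine (Real.rpow_le_rpow (norm_nonneg _) b hq0.le).trans
      ((mc_add_rpow q hq0.le _ _ (by positivity) (by positivity)).trans (le_of_eq ?_))
    rw [mul_add, ← Real.mul_rpow (by norm_num) (by positivity), 
      ← Real.mul_rpow (by norm_num) (by positivity), ← Real.mul_rpow (by positivity) (by positivity)]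
    congr 2 <;> ring
  calc _ ≤ ∑ j : Fin n, ((m:ℝ)^q * ‖v j‖^q + (4 * R)^q) := Finset.sum_le_sum fun j _ => step4 j
    _ = (m:ℝ)^q * ∑ j, ‖v j‖^q + n * (4 * R)^q := by
      rw [Finset.sum_add_distrib, ← Finset.mul_sum]; simp
    _ ≤ (m:ℝ)^q * (4 * C * A)^q + (n:ℝ)^q * (4 * R)^q := by
      gcongr; exact hself _ hn1
    _ = (m * (4 * C * A))^q + (m * A)^q := by
      rw [← Real.mul_rpow (by positivity) (by positivity), ← Real.mul_rpow (by positivity) (by positivity)]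
      congr 2
      rw [hR, hmr]; ring
    _ ≤ (m * (4 * C * A) + m * A)^q := 
      Real.add_rpow_le_rpow_add (by positivity) (by positivity) (by linarith)
    _ = ((4 * C + 1) * m)^q * A^q := by
      rw [← Real.mul_rpow (by positivity) hA0]; congr 1; ring
    _ = _ := by rw [hAq]; ring
end

/-- **Metric cotype theorem (Mendel–Naor).** A Banach space has Rademacher cotype
`q ∈ [2,∞)` if and only if it has metric cotype `q`. -/
theorem rademacher_cotype_iff_metric_cotype (X : Type*) [NormedAddCommGroup X]
    [NormedSpace ℝ X] [CompleteSpace X] (q : ℝ) (hq : 2 ≤ q) :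
    RademacherCotype X q ↔ MetricCotype X q := by
  exact ⟨mc_rad_to_metric q hq, mc_metric_to_rad q hq⟩
end
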